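/- arXiv:2604.10457 — 6 statements merged into one kernel-verified Lean document; each statement's English description precedes it below -/
import Mathlib

section
/- Let ℋ be an isomorphism-closed family of labeled k-uniform hypergraphs on [v], each simple and 2-regular, with exactly v vertices and s edges. Then under the null model Q, E_Q[F_ℋ(z)] = 0 and E_Q[F_ℋ(z)²] = |ℋ| · (n)_v · v! · p^s; in particular Var_Q(F_ℋ(z)) = |ℋ| · (n)_v · v! · p^s. -/
open Finset

/-- The index set of `k`-element subsets of `[n]`, used to index the coordinates of an
observation `z ∈ {0,±1}^{binom([n],k)}`. -/
abbrev KSet (n k : ℕ) := {α : Finset (Fin n) // α.card = k}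

/-- Coordinate weights under the null model `Q`: value `0` with probability `1−p`,
values `+1` and `−1` each with probability `p/2`. -/
noncomputable def qWeight (p : ℝ) : Fin 3 → ℝ := ![1 - p, p / 2, p / 2]

/-- Coordinate weights under the planted model `P_x`: the coordinate is `0` with probability
`1−p`, equals `x_α` with probability `p(1+δ)/2` and `−x_α` with probability `p(1−δ)/2`. -/
noncomputable def pWeight (p δ : ℝ) : Fin 3 → ℝ := ![1 - p, p * (1 + δ) / 2, p * (1 - δ) / 2]

/-- Realized coordinate values under the null model. -/
noncomputable def qVal : Fin 3 → ℝ := ![0, 1, -1]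

/-- Realized coordinate values under the planted model: `0`, `x_α`, `−x_α`,
where `x_α = ∏_{i∈α} x_i`. -/
noncomputable def pVal {n k : ℕ} (x : Fin n → ℝ) (α : KSet n k) : Fin 3 → ℝ :=
  ![0, ∏ i ∈ α.1, x i, -∏ i ∈ α.1, x i]

/-- Expectation of a statistic `F` of the observation `z` under the null (Bernoulli) model
`Q`, in which the coordinates `z(α)` are independent with law given by `qWeight p`. -/
noncomputable def expQ (n k : ℕ) (p : ℝ) (F : (KSet n k → ℝ) → ℝ) : ℝ :=
  ∑ ω : KSet n k → Fin 3, (∏ α : KSet n k, qWeight p (ω α)) * F (fun α => qVal (ω α))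

/-- Expectation of a statistic `F` of the observation `z` under the planted Bernoulli model
`P_x`, in which the coordinates `z(α) = b_α x_α ξ_α` are independent. -/
noncomputable def expP (n k : ℕ) (p δ : ℝ) (x : Fin n → ℝ) (F : (KSet n k → ℝ) → ℝ) : ℝ :=
  ∑ ω : KSet n k → Fin 3, (∏ α : KSet n k, pWeight p δ (ω α)) * F (fun α => pVal x α (ω α))

/-- Extend an observation `z` indexed by `k`-subsets of `[n]` to all finsets (value `0`
on sets of the wrong size). -/
noncomputable def zext {n k : ℕ} (z : KSet n k → ℝ) (β : Finset (Fin n)) : ℝ :=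
  if h : β.card = k then z ⟨β, h⟩ else 0

/-- The embedding statistic `T_H(z) = ∑_{φ : [v] ↪ [n]} ∏_{e ∈ E(H)} z(φ(e))`
of a labeled hypergraph `H` on `[v]`. -/
noncomputable def THyp {v n k : ℕ} (H : Finset (Finset (Fin v))) (z : KSet n k → ℝ) : ℝ :=
  ∑ φ : Fin v ↪ Fin n, ∏ e ∈ H, zext z (e.map φ)

/-- Degree of a vertex `u` in an edge set `E`. -/
def hdeg {V : Type*} [DecidableEq V] (E : Finset (Finset V)) (u : V) : ℕ :=
  (E.filter (fun e => u ∈ e)).card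

/-- Independence of the coordinates under `Q`: the expectation of a product of functions of
single coordinates factorizes. -/
theorem expQ_prod (n k : ℕ) (p : ℝ) (f : KSet n k → ℝ → ℝ) :
    expQ n k p (fun z => ∏ α, f α (z α)) = ∏ α, ∑ i, qWeight p i * f α (qVal i) := by
  rw [Finset.prod_univ_sum, Fintype.piFinset_univ]
  simp only [expQ, Finset.prod_mul_distrib]

theorem expQ_sum {ι : Type*} (n k : ℕ) (p : ℝ) (t : Finset ι) (F : ι → (KSet n k → ℝ) → ℝ) :
    expQ n k p (fun z => ∑ i ∈ t, F i z) = ∑ i ∈ t, expQ n k p (F i) := by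
  simp only [expQ, Finset.mul_sum]
  exact Finset.sum_comm

theorem prod_zext {n k : ℕ} (z : KSet n k → ℝ) (A : Finset (Finset (Fin n)))
    (hA : ∀ β ∈ A, β.card = k) :
    ∏ β ∈ A, zext z β = ∏ α : KSet n k, if α.1 ∈ A then z α else 1 := by
  rw [← Finset.prod_filter]
  symm
  refine Finset.prod_bij (fun α _ => α.1) ?_ ?_ ?_ ?_
  · intro α hα
    exact (Finset.mem_filter.1 hα).2
  · intro α _ β _ h
    exact Subtype.ext h
  · intro β hβ
    exact ⟨⟨β, hA β hβ⟩, by simpa using hβ, rfl⟩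
  · intro α _
    simp [zext, α.2]

/-- Distinct square-free monomials are orthogonal under `Q`. -/
theorem expQ_prod_mul_prod {n k : ℕ} (p : ℝ) (A B : Finset (Finset (Fin n)))
    (hA : ∀ β ∈ A, β.card = k) (hB : ∀ β ∈ B, β.card = k) :
    expQ n k p (fun z => (∏ β ∈ A, zext z β) * ∏ β ∈ B, zext z β)
      = if A = B then p ^ A.card else 0 := by
  simp only [prod_zext _ A hA, prod_zext _ B hB, ← Finset.prod_mul_distrib]
  rw [expQ_prod n k p
    (fun α x => (if α.1 ∈ A then x else 1) * (if α.1 ∈ B then x else 1))]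
  split_ifs with h
  · subst h
    have key : ∀ α : KSet n k, (∑ i, qWeight p i *
        ((if α.1 ∈ A then qVal i else 1) * (if α.1 ∈ A then qVal i else 1)))
          = if α.1 ∈ A then p else 1 := by
      intro α
      split_ifs
      · simp [Fin.sum_univ_three, qWeight, qVal]
      · simp [Fin.sum_univ_three, qWeight]
        ring
    rw [Finset.prod_congr rfl fun α _ => key α, ← prod_zext (fun _ => p) A hA]
    refine (Finset.prod_congr rfl fun β hβ => ?_).trans (Finset.prod_const p)
    simp [zext, hA β hβ]
  · obtain ⟨β, hβ⟩ : ∃ β, ¬ (β ∈ A ↔ β ∈ B) := by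
      by_contra! hc
      exact h (Finset.ext hc)
    have hβk : β.card = k := by
      by_cases hm : β ∈ A
      · exact hA β hm
      · exact hB β (by tauto)
    refine Finset.prod_eq_zero (Finset.mem_univ (⟨β, hβk⟩ : KSet n k)) ?_
    by_cases hm : β ∈ A
    · have hm' : β ∉ B := by tauto
      simp [Fin.sum_univ_three, qWeight, qVal, hm, hm']
    · have hm' : β ∈ B := by tauto
      simp [Fin.sum_univ_three, qWeight, qVal, hm, hm']

/-- The hypergraph with edges `φ(e)` for `e ∈ H`. -/
def hmap {V W : Type*} (φ : V ↪ W) (H : Finset (Finset V)) : Finset (Finset W) :=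
  H.map (Finset.mapEmbedding φ).toEmbedding

theorem mem_hmap {V W : Type*} {φ : V ↪ W} {H : Finset (Finset V)} {β : Finset W} :
    β ∈ hmap φ H ↔ ∃ e ∈ H, e.map φ = β := by
  simp [hmap]

theorem card_hmap {V W : Type*} (φ : V ↪ W) (H : Finset (Finset V)) :
    (hmap φ H).card = H.card :=
  Finset.card_map _

theorem hmap_trans {U V W : Type*} (φ : U ↪ V) (ψ : V ↪ W) (H : Finset (Finset U)) :
    hmap (φ.trans ψ) H = hmap ψ (hmap φ H) := by
  ext β
  simp [mem_hmap, Finset.map_map]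

theorem hmap_injective {V W : Type*} (φ : V ↪ W) : Function.Injective (hmap φ) :=
  Finset.map_injective _

theorem hmap_refl {V : Type*} (H : Finset (Finset V)) :
    hmap (Function.Embedding.refl V) H = H := by
  ext β
  simp [mem_hmap]

theorem hmap_equiv_symm {V W : Type*} (σ : V ≃ W) (H : Finset (Finset W)) :
    hmap σ.toEmbedding (hmap σ.symm.toEmbedding H) = H := by
  rw [← hmap_trans, ← Equiv.trans_toEmbedding, Equiv.symm_trans_self, Equiv.refl_toEmbedding,
    hmap_refl]

theorem hmap_perm {V : Type*} [DecidableEq V] (π : Equiv.Perm V) (H : Finset (Finset V)) :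
    hmap π.toEmbedding H = H.image (fun e => e.image π) := by
  ext β
  simp [mem_hmap, Finset.map_eq_image]

theorem THyp_eq {v n k : ℕ} (H : Finset (Finset (Fin v))) (z : KSet n k → ℝ) :
    THyp H z = ∑ φ : Fin v ↪ Fin n, ∏ β ∈ hmap φ H, zext z β := by
  simp [THyp, hmap]

theorem exists_mem_of_hdeg_ne_zero {V : Type*} [DecidableEq V] {E : Finset (Finset V)} {u : V}
    (h : hdeg E u ≠ 0) : ∃ e ∈ E, u ∈ e := by
  obtain ⟨e, he⟩ := Finset.card_ne_zero.1 h
  exact ⟨e, Finset.mem_filter.1 he⟩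

/-- If `H'` has no isolated vertices, two embeddings of `H` and `H'` with the same image differ by
a permutation of the vertex set. -/
theorem exists_perm_of_hmap_eq {V W : Type*} [Finite V] {H H' : Finset (Finset V)}
    {φ ψ : V ↪ W} (hcov : ∀ u, ∃ e ∈ H', u ∈ e) (h : hmap ψ H' = hmap φ H) :
    ∃ σ : Equiv.Perm V, σ.toEmbedding.trans φ = ψ := by
  have hex : ∀ u, ∃ w, φ w = ψ u := by
    intro u
    obtain ⟨e, he, hu⟩ := hcov u
    have hm : e.map ψ ∈ hmap φ H := h ▸ mem_hmap.2 ⟨e, he, rfl⟩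
    obtain ⟨e', -, hee⟩ := mem_hmap.1 hm
    have hu' : ψ u ∈ e'.map φ := hee ▸ Finset.mem_map_of_mem ψ hu
    obtain ⟨w, -, hw⟩ := Finset.mem_map.1 hu'
    exact ⟨w, hw⟩
  choose f hf using hex
  have hinj : Function.Injective f := fun a b hab => ψ.injective (by rw [← hf, ← hf, hab])
  refine ⟨Equiv.ofBijective f (Finite.injective_iff_bijective.1 hinj), ?_⟩
  ext u
  exact hf u

/-- In an isomorphism-closed family without isolated vertices, every embedded copy of a member
arises from exactly `v!` pairs of a member and an embedding. -/
theorem card_filter_hmap_eq {V W : Type*} [Fintype V] [DecidableEq V] [Fintype W] [DecidableEq W]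
    (ℋ : Finset (Finset (Finset V))) (hcov : ∀ H ∈ ℋ, ∀ u, ∃ e ∈ H, u ∈ e)
    (hclosed : ∀ H ∈ ℋ, ∀ π : Equiv.Perm V, hmap π.toEmbedding H ∈ ℋ)
    {H : Finset (Finset V)} (hH : H ∈ ℋ) (φ : V ↪ W) :
    ((ℋ ×ˢ (Finset.univ : Finset (V ↪ W))).filter
      (fun x => hmap φ H = hmap x.2 x.1)).card = (Fintype.card V).factorial := by
  rw [← Fintype.card_perm, ← Finset.card_univ]
  symm
  refine Finset.card_bij
    (fun σ _ => (hmap σ.symm.toEmbedding H, σ.toEmbedding.trans φ)) ?_ ?_ ?_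
  · intro σ _
    simp only [Finset.mem_filter, Finset.mem_product, Finset.mem_univ, and_true]
    exact ⟨hclosed H hH σ.symm, by rw [hmap_trans, hmap_equiv_symm]⟩
  · intro σ _ τ _ h
    ext u
    exact φ.injective (DFunLike.congr_fun (Prod.ext_iff.1 h).2 u)
  · rintro ⟨H', ψ⟩ hx
    simp only [Finset.mem_filter, Finset.mem_product, Finset.mem_univ, and_true] at hx
    obtain ⟨σ, rfl⟩ := exists_perm_of_hmap_eq (hcov H' hx.1) hx.2.symm
    refine ⟨σ, Finset.mem_univ _, Prod.ext ?_ rfl⟩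
    apply hmap_injective σ.toEmbedding
    apply hmap_injective φ
    rw [hmap_equiv_symm, ← hmap_trans]
    exact hx.2

/-- For an isomorphism-closed family `ℋ` of simple `2`-regular labeled
`k`-uniform hypergraphs on `[v]`, each with `v` vertices and `s` edges, the statistic
`F_ℋ(z) = ∑_{H∈ℋ} T_H(z)` satisfies, under the null model `Q`:
`E_Q[F_ℋ] = 0`, `E_Q[F_ℋ²] = |ℋ|·(n)_v·v!·p^s`, and hence
`Var_Q(F_ℋ) = |ℋ|·(n)_v·v!·p^s`. -/
theorem stmt2 (n k v s : ℕ) (hn : 1 ≤ n) (hk : 2 ≤ k) (hv : 1 ≤ v)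
    (p : ℝ) (hp0 : 0 ≤ p) (hp1 : p ≤ 1)
    (ℋ : Finset (Finset (Finset (Fin v))))
    (hunif : ∀ H ∈ ℋ, ∀ e ∈ H, e.card = k)
    (hcard : ∀ H ∈ ℋ, H.card = s)
    (hreg : ∀ H ∈ ℋ, ∀ u : Fin v, hdeg H u = 2)
    (hclosed : ∀ H ∈ ℋ, ∀ π : Equiv.Perm (Fin v), H.image (fun e => e.image π) ∈ ℋ) :
    expQ n k p (fun z => ∑ H ∈ ℋ, THyp H z) = 0 ∧
    expQ n k p (fun z => (∑ H ∈ ℋ, THyp H z) ^ 2)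
      = (ℋ.card : ℝ) * (n.descFactorial v : ℝ) * (v.factorial : ℝ) * p ^ s ∧
    expQ n k p (fun z => (∑ H ∈ ℋ, THyp H z) ^ 2)
      - (expQ n k p (fun z => ∑ H ∈ ℋ, THyp H z)) ^ 2
      = (ℋ.card : ℝ) * (n.descFactorial v : ℝ) * (v.factorial : ℝ) * p ^ s := by
  have hcov : ∀ H ∈ ℋ, ∀ u, ∃ e ∈ H, u ∈ e := fun H hH u =>
    exists_mem_of_hdeg_ne_zero (by rw [hreg H hH u]; norm_num)
  have hmapk : ∀ H ∈ ℋ, ∀ φ : Fin v ↪ Fin n, ∀ β ∈ hmap φ H, β.card = k := by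
    intro H hH φ β hβ
    obtain ⟨e, he, rfl⟩ := mem_hmap.1 hβ
    rw [Finset.card_map, hunif H hH e he]
  have hmean : expQ n k p (fun z => ∑ H ∈ ℋ, THyp H z) = 0 := by
    simp only [THyp_eq, expQ_sum]
    refine Finset.sum_eq_zero fun H hH => Finset.sum_eq_zero fun φ _ => ?_
    have h := expQ_prod_mul_prod p (hmap φ H) ∅ (hmapk H hH φ) (by simp)
    simp only [Finset.prod_empty, mul_one] at h
    rw [h, if_neg]
    intro h0
    obtain ⟨e, he, -⟩ := hcov H hH ⟨0, hv⟩
    have : e.map φ ∈ hmap φ H := mem_hmap.2 ⟨e, he, rfl⟩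
    simp [h0] at this
  have hsq : expQ n k p (fun z => (∑ H ∈ ℋ, THyp H z) ^ 2)
      = (ℋ.card : ℝ) * (n.descFactorial v : ℝ) * (v.factorial : ℝ) * p ^ s := by
    simp only [THyp_eq, ← Finset.sum_product', sq, Finset.sum_mul_sum, expQ_sum]
    have hinner : ∀ x ∈ ℋ ×ˢ (Finset.univ : Finset (Fin v ↪ Fin n)),
        ∑ y ∈ ℋ ×ˢ (Finset.univ : Finset (Fin v ↪ Fin n)),
          expQ n k p (fun z => (∏ β ∈ hmap x.2 x.1, zext z β) * ∏ β ∈ hmap y.2 y.1, zext z β)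
          = (v.factorial : ℝ) * p ^ s := by
      intro x hx
      have hxH := (Finset.mem_product.1 hx).1
      have hterm : ∀ y ∈ ℋ ×ˢ (Finset.univ : Finset (Fin v ↪ Fin n)),
          expQ n k p (fun z => (∏ β ∈ hmap x.2 x.1, zext z β) * ∏ β ∈ hmap y.2 y.1, zext z β)
            = if hmap x.2 x.1 = hmap y.2 y.1 then p ^ s else 0 := by
        intro y hy
        rw [expQ_prod_mul_prod p _ _ (hmapk _ hxH _) (hmapk _ (Finset.mem_product.1 hy).1 _),
          card_hmap, hcard _ hxH]
      rw [Finset.sum_congr rfl hterm, ← Finset.sum_filter, Finset.sum_const,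
        card_filter_hmap_eq ℋ hcov (fun H hH π => hmap_perm π H ▸ hclosed H hH π) hxH x.2,
        Fintype.card_fin, nsmul_eq_mul]
    rw [Finset.sum_product, Finset.sum_congr rfl hinner, Finset.sum_const, Finset.card_product, Finset.card_univ,
      Fintype.card_embedding_eq, Fintype.card_fin, Fintype.card_fin, nsmul_eq_mul]
    push_cast
    ring
  exact ⟨hmean, hsq, by rw [hmean, hsq]; ring⟩
end

section
/- Let H and H' be simple 2-regular labeled k-uniform hypergraphs each with s edges, let φ: V(H) ↪ [n] and ψ: V(H') ↪ [n] be injections, and let j := |{φ(e) : e ∈ E(H)} ∩ {ψ(e') : e' ∈ E(H')}| be the number of common image hyperedges. Then for every x ∈ {±1}^n, under the planted Bernoulli model P_x, E_{P_x}[ ∏_{e∈E(H)} z(φ(e)) · ∏_{e'∈E(H')} z(ψ(e')) ] = p^{2s−j} · δ^{2s−2j}. In particular, the product of planted signs x_α over the symmetric difference of the two image edge sets equals 1, because every vertex has even degree in that symmetric difference. -/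
open Finset

/-- Independence of the coordinates: the planted expectation of a product of functions of the
individual coordinates is the product of the expectations. -/
lemma expP_prod (n k : ℕ) (p δ : ℝ) (x : Fin n → ℝ) (f : KSet n k → ℝ → ℝ) :
    expP n k p δ x (fun z => ∏ α, f α (z α))
      = ∏ α, ∑ w, pWeight p δ w * f α (pVal x α w) := by
  simp only [expP, ← Finset.prod_mul_distrib]
  rw [Finset.prod_univ_sum, Fintype.piFinset_univ]

/-- A product over a family of `k`-sets, written as a product over all of `KSet n k`. -/
lemma prod_eq_prod_kSet {n k : ℕ} {M : Type*} [CommMonoid M] (S : Finset (Finset (Fin n)))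
    (hS : ∀ β ∈ S, β.card = k) (f : Finset (Fin n) → M) :
    ∏ β ∈ S, f β = ∏ α : KSet n k, if α.1 ∈ S then f α.1 else 1 := by
  rw [← Finset.prod_filter]
  symm
  refine Finset.prod_bij (fun α _ => α.1) ?_ ?_ ?_ ?_
  · simp
  · exact fun _ _ _ _ h => Subtype.ext h
  · exact fun β hβ => ⟨⟨β, hS β hβ⟩, by simpa using hβ, rfl⟩
  · simp

lemma zext_coe {n k : ℕ} (z : KSet n k → ℝ) (α : KSet n k) : zext z α.1 = z α := by
  simp [zext, α.2]

lemma sq_eq_one_of_sign {a : ℝ} (ha : a = 1 ∨ a = -1) : a ^ 2 = 1 := by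
  rcases ha with rfl | rfl <;> norm_num

lemma sq_prod_sign {ι : Type*} (x : ι → ℝ) (hx : ∀ i, x i = 1 ∨ x i = -1) (β : Finset ι) :
    (∏ i ∈ β, x i) ^ 2 = 1 := by
  rw [← Finset.prod_pow]
  exact Finset.prod_eq_one fun i _ => sq_eq_one_of_sign (hx i)

/-- Planted expectation of a monomial with exponent one on `S` and exponent two on `I`. -/
lemma expP_monomial {n k : ℕ} (p δ : ℝ) (x : Fin n → ℝ) (hx : ∀ i, x i = 1 ∨ x i = -1)
    (S I : Finset (Finset (Fin n))) (hSI : Disjoint S I)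
    (hS : ∀ β ∈ S, β.card = k) (hI : ∀ β ∈ I, β.card = k) :
    expP n k p δ x (fun z => (∏ β ∈ S, zext z β) * ∏ β ∈ I, zext z β ^ 2)
      = (p * δ) ^ S.card * p ^ I.card * ∏ β ∈ S, ∏ i ∈ β, x i := by
  have hmon : (fun z : KSet n k → ℝ => (∏ β ∈ S, zext z β) * ∏ β ∈ I, zext z β ^ 2)
      = fun z => ∏ α : KSet n k,
          (if α.1 ∈ S then z α else 1) * (if α.1 ∈ I then z α ^ 2 else 1) := by
    funext z
    rw [prod_eq_prod_kSet S hS, prod_eq_prod_kSet I hI, ← Finset.prod_mul_distrib]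
    simp only [zext_coe]
  have hval : (p * δ) ^ S.card * p ^ I.card * ∏ β ∈ S, ∏ i ∈ β, x i
      = (∏ β ∈ S, p * δ * ∏ i ∈ β, x i) * ∏ β ∈ I, p := by
    rw [Finset.prod_mul_distrib, Finset.prod_const, Finset.prod_const]
    ring
  rw [hmon, expP_prod n k p δ x fun α t =>
      (if α.1 ∈ S then t else 1) * (if α.1 ∈ I then t ^ 2 else 1), hval,
    prod_eq_prod_kSet S hS, prod_eq_prod_kSet I hI, ← Finset.prod_mul_distrib]
  refine Finset.prod_congr rfl fun α _ => ?_
  have hsq := sq_prod_sign x hx α.1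
  by_cases h1 : α.1 ∈ S
  · have h2 : α.1 ∉ I := Finset.disjoint_left.mp hSI h1
    simp [h1, h2, Fin.sum_univ_three, pWeight, pVal]
    ring
  · by_cases h2 : α.1 ∈ I
    · simp [h1, h2, Fin.sum_univ_three, pWeight, pVal, hsq]
      ring
    · simp [h1, h2, Fin.sum_univ_three, pWeight]
      ring

lemma prod_mul_prod_eq_symmDiff {ι M : Type*} [DecidableEq ι] [CommMonoid M] (A B : Finset ι)
    (f : ι → M) :
    (∏ a ∈ A, f a) * ∏ b ∈ B, f b
      = (∏ a ∈ symmDiff A B, f a) * ∏ a ∈ A ∩ B, f a ^ 2 := by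
  have hd : Disjoint (A \ B) (B \ A) := disjoint_sdiff_sdiff
  rw [symmDiff_def, Finset.sup_eq_union, Finset.prod_union hd, Finset.prod_pow,
    ← Finset.prod_inter_mul_prod_sdiff A B f, ← Finset.prod_inter_mul_prod_sdiff B A f,
    Finset.inter_comm B A, sq]
  ac_rfl

/-- In a `2`-regular hypergraph the product of the planted signs over all image edges is `1`. -/
lemma prod_image_sign_eq_one {n v : ℕ} (x : Fin n → ℝ) (hx : ∀ i, x i = 1 ∨ x i = -1)
    (H : Finset (Finset (Fin v))) (hreg : ∀ u, hdeg H u = 2) (φ : Fin v ↪ Fin n) :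
    ∏ α ∈ H.image (fun e => e.map φ), ∏ i ∈ α, x i = 1 := by
  rw [Finset.prod_image (Finset.map_injective φ).injOn]
  simp only [Finset.prod_map]
  rw [Finset.prod_comm' (t' := Finset.univ) (s' := fun u => H.filter fun e => u ∈ e)
    (by simp)]
  refine Finset.prod_eq_one fun u _ => ?_
  have hu : (H.filter fun e => u ∈ e).card = 2 := hreg u
  rw [Finset.prod_const, hu]
  exact sq_eq_one_of_sign (hx _)

/-- For simple `2`-regular labeled `k`-uniform hypergraphs `H`, `H'`, each
with `s` edges, injections `φ`, `ψ` into `[n]`, and `j` the number of common image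
hyperedges, under the planted Bernoulli model `P_x` the expectation of the product of the
two embedding monomials equals `p^{2s−j} δ^{2s−2j}`; in particular the product of planted
signs `x_α` over the symmetric difference of the two image edge sets equals `1`. -/
theorem stmt4 (n k v₁ v₂ s : ℕ) (hn : 1 ≤ n) (hk : 2 ≤ k)
    (p δ : ℝ) (hp0 : 0 ≤ p) (hp1 : p ≤ 1) (hδ1 : -1 ≤ δ) (hδ2 : δ ≤ 1)
    (x : Fin n → ℝ) (hx : ∀ i, x i = 1 ∨ x i = -1)
    (H : Finset (Finset (Fin v₁))) (H' : Finset (Finset (Fin v₂)))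
    (hunif : ∀ e ∈ H, e.card = k) (hunif' : ∀ e ∈ H', e.card = k)
    (hreg : ∀ u : Fin v₁, hdeg H u = 2) (hreg' : ∀ u : Fin v₂, hdeg H' u = 2)
    (hs : H.card = s) (hs' : H'.card = s)
    (φ : Fin v₁ ↪ Fin n) (ψ : Fin v₂ ↪ Fin n) :
    expP n k p δ x (fun z =>
        (∏ e ∈ H, zext z (e.map φ)) * ∏ e ∈ H', zext z (e.map ψ))
      = p ^ (2 * s - ((H.image (fun e => e.map φ)) ∩ (H'.image (fun e => e.map ψ))).card)
        * δ ^ (2 * s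
            - 2 * ((H.image (fun e => e.map φ)) ∩ (H'.image (fun e => e.map ψ))).card) ∧
    ∏ α ∈ symmDiff (H.image (fun e => e.map φ)) (H'.image (fun e => e.map ψ)),
        ∏ i ∈ α, x i = 1 := by
  set A := H.image (fun e => e.map φ) with hA
  set B := H'.image (fun e => e.map ψ) with hB
  have hAc : A.card = s := by rw [hA, Finset.card_image_of_injective _ (Finset.map_injective φ), hs]
  have hBc : B.card = s := by
    rw [hB, Finset.card_image_of_injective _ (Finset.map_injective ψ), hs']
  have hAk : ∀ β ∈ A, β.card = k := by
    simp only [hA, Finset.forall_mem_image, Finset.card_map]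
    exact hunif
  have hBk : ∀ β ∈ B, β.card = k := by
    simp only [hB, Finset.forall_mem_image, Finset.card_map]
    exact hunif'
  have hsign : ∏ α ∈ symmDiff A B, ∏ i ∈ α, x i = 1 := by
    have h := prod_mul_prod_eq_symmDiff A B fun α => ∏ i ∈ α, x i
    rw [prod_image_sign_eq_one x hx H hreg φ, prod_image_sign_eq_one x hx H' hreg' ψ,
      Finset.prod_eq_one (s := A ∩ B) fun α _ => sq_prod_sign x hx α] at h
    simpa using h.symm
  refine ⟨?_, hsign⟩
  have hstat : (fun z : KSet n k → ℝ =>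
        (∏ e ∈ H, zext z (e.map φ)) * ∏ e ∈ H', zext z (e.map ψ))
      = fun z => (∏ β ∈ symmDiff A B, zext z β) * ∏ β ∈ A ∩ B, zext z β ^ 2 := by
    funext z
    rw [← prod_mul_prod_eq_symmDiff, hA, hB, Finset.prod_image (Finset.map_injective φ).injOn,
      Finset.prod_image (Finset.map_injective ψ).injOn]
  have hdisj : Disjoint (symmDiff A B) (A ∩ B) := disjoint_symmDiff_inf A B
  have hSk : ∀ β ∈ symmDiff A B, β.card = k := fun β hβ => by
    rcases Finset.mem_symmDiff.mp hβ with h | h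
    exacts [hAk β h.1, hBk β h.1]
  rw [hstat, expP_monomial p δ x hx _ _ hdisj hSk
    fun β hβ => hAk β (Finset.mem_inter.mp hβ).1, hsign]
  have hcard : (symmDiff A B).card + 2 * (A ∩ B).card = 2 * s := by
    have hd : Disjoint (A \ B) (B \ A) := disjoint_sdiff_sdiff
    have h1 := Finset.card_inter_add_card_sdiff A B
    have h2 := Finset.card_inter_add_card_sdiff B A
    rw [Finset.inter_comm] at h2
    rw [symmDiff_def, Finset.sup_eq_union, Finset.card_union_of_disjoint hd]
    omega
  have hδexp : 2 * s - 2 * (A ∩ B).card = (symmDiff A B).card := by omega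
  have hpexp : 2 * s - (A ∩ B).card = (symmDiff A B).card + (A ∩ B).card := by omega
  rw [hδexp, hpexp]
  ring
end

section
/- There exist constants C > 0 and n₀ such that the following holds for all n ≥ n₀. Let k ≥ 3, δ ∈ (0,1] with δ² n^{0.1} ≥ C log n, let x ∈ {±1}^n be the planted assignment, and let x̂ ∈ {±1}^n be a fixed estimate with |{j ∈ [n] : x̂_j ≠ x_j}| ≤ n/(4k). Draw an independent clean-up sample in the Bernoulli model with inclusion probability p' := m'/binom(n,k), where m' := ⌈n^{1.1}⌉: each k-subset e of [n] is included independently with probability p', and each included e carries the label y_e = ξ_e · ∏_{j∈e} x_j, where the ξ_e ∈ {±1} are independent with Pr[ξ_e = 1] = (1+δ)/2. For each i ∈ [n], set T_i := Σ over included e containing i of y_e · ∏_{j∈e∖{i}} x̂_j, and x̃_i := sgn(T_i) (ties broken arbitrarily). Then Pr[x̃_i = x_i for all i ∈ [n]] ≥ 1 − n^{−10}. -/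
open Finset

/-- Sign value of an outcome state: `0` if the constraint is not included, `ξ = ±1` if
included with noise sign `ξ`. -/
noncomputable def sgn3 : Fin 3 → ℝ := ![0, 1, -1]

/-- The clean-up vote `T_i = Σ_{included e ∋ i} y_e ∏_{j ∈ e∖{i}} x̂_j`, where
`y_e = ξ_e ∏_{j∈e} x_j`, as a function of the outcome `ω` of the clean-up sample. -/
noncomputable def Tclean (n k : ℕ) (x xh : Fin n → ℝ) (ω : KSet n k → Fin 3) (i : Fin n) : ℝ :=
  ∑ α : KSet n k,
    if i ∈ α.1 then sgn3 (ω α) * (∏ j ∈ α.1, x j) * ∏ j ∈ α.1.erase i, xh j else 0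

/-- The number of `k`-element subsets of `[n]` containing a given set `s`. -/
lemma card_kset_superset {n k : ℕ} (s : Finset (Fin n)) (hs : s.card ≤ k) :
    (univ.filter fun α : KSet n k => s ⊆ α.1).card = (n - s.card).choose (k - s.card) := by
  have h := card_filter_powersetCard_subset s univ k (subset_univ s) hs
  rw [card_univ, Fintype.card_fin] at h
  rw [← h]
  refine card_bij (fun α _ => α.1) ?_ ?_ ?_
  · intro α hα
    simpa [mem_powersetCard, α.2] using hα
  · intro α _ β _ hαβ
    exact Subtype.ext hαβ
  · intro t ht
    simp only [mem_filter, mem_powersetCard, subset_univ, true_and] at ht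
    exact ⟨⟨t, ht.1⟩, by simpa using ht.2, rfl⟩

lemma pWeight_nonneg {p δ : ℝ} (hp0 : 0 ≤ p) (hp1 : p ≤ 1) (hδ0 : 0 ≤ δ) (hδ1 : δ ≤ 1)
    (b : Fin 3) : 0 ≤ pWeight p δ b := by
  have h₁ : 0 ≤ p * (1 + δ) / 2 := by positivity
  have h₂ : 0 ≤ p * (1 - δ) / 2 := by
    have := mul_nonneg hp0 (sub_nonneg.2 hδ1)
    linarith
  fin_cases b <;> simp [pWeight, hp1] <;> linarith

lemma sum_prod_eq_prod_sum {ι κ : Type*} [Fintype ι] [DecidableEq ι] [Fintype κ]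
    (f : ι → κ → ℝ) : ∑ ω : ι → κ, ∏ α, f α (ω α) = ∏ α, ∑ b, f α b := by
  rw [prod_univ_sum, Fintype.piFinset_univ]

lemma sum_prod_pWeight {ι : Type*} [Fintype ι] [DecidableEq ι] (p δ : ℝ) :
    ∑ ω : ι → Fin 3, ∏ α, pWeight p δ (ω α) = 1 := by
  rw [sum_prod_eq_prod_sum (fun _ => pWeight p δ)]
  refine prod_eq_one fun α _ => ?_
  simp only [pWeight, Fin.sum_univ_three, Matrix.cons_val]
  ring

/-- Bound on the exponential moment of a weighted sum of independent outcome signs. -/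
lemma sum_prod_pWeight_mul_exp_le {ι : Type*} [Fintype ι] [DecidableEq ι] {p δ : ℝ}
    (hp0 : 0 ≤ p) (hp1 : p ≤ 1) (hδ0 : 0 ≤ δ) (hδ1 : δ ≤ 1) (l : ℝ) (a : ι → ℝ) :
    ∑ ω : ι → Fin 3, (∏ α, pWeight p δ (ω α)) * Real.exp (-l * ∑ α, a α * sgn3 (ω α)) ≤
      Real.exp (p * ∑ α, (Real.cosh (l * a α) - 1 - δ * Real.sinh (l * a α))) := by
  have hsplit : ∀ ω : ι → Fin 3,
      (∏ α, pWeight p δ (ω α)) * Real.exp (-l * ∑ α, a α * sgn3 (ω α)) =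
        ∏ α, pWeight p δ (ω α) * Real.exp (-l * (a α * sgn3 (ω α))) := by
    intro ω
    rw [mul_sum, Real.exp_sum, prod_mul_distrib]
  simp_rw [hsplit]
  rw [sum_prod_eq_prod_sum (fun α b => pWeight p δ b * Real.exp (-l * (a α * sgn3 b))), mul_sum,
    Real.exp_sum]
  refine prod_le_prod (fun α _ => sum_nonneg fun b _ =>
    mul_nonneg (pWeight_nonneg hp0 hp1 hδ0 hδ1 b) (Real.exp_pos _).le) fun α _ => ?_
  refine le_trans (le_of_eq ?_) (Real.add_one_le_exp _)
  simp only [pWeight, sgn3, Fin.sum_univ_three, Matrix.cons_val, mul_zero, mul_one, mul_neg,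
    neg_mul, neg_neg, Real.exp_zero, neg_zero]
  rw [Real.cosh_eq, Real.sinh_eq]
  ring

/-- The coefficient of the outcome sign of `α` in the vote `x_i T_i`. -/
noncomputable def voteCoeff {n k : ℕ} (x xh : Fin n → ℝ) (i : Fin n) (α : KSet n k) : ℝ :=
  if i ∈ α.1 then ∏ j ∈ α.1.erase i, x j * xh j else 0

lemma mul_Tclean {n k : ℕ} {x : Fin n → ℝ} (xh : Fin n → ℝ) (hx : ∀ i, x i = 1 ∨ x i = -1)
    (ω : KSet n k → Fin 3) (i : Fin n) :
    x i * Tclean n k x xh ω i = ∑ α, voteCoeff x xh i α * sgn3 (ω α) := by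
  rw [Tclean, mul_sum]
  refine sum_congr rfl fun α _ => ?_
  unfold voteCoeff
  split_ifs with h
  · have hsq : x i * x i = 1 := by rcases hx i with h | h <;> rw [h] <;> norm_num
    rw [← mul_prod_erase α.1 x h, prod_mul_distrib]
    linear_combination (sgn3 (ω α) * (∏ j ∈ α.1.erase i, x j) * ∏ j ∈ α.1.erase i, xh j) * hsq
  · simp

lemma prod_eq_one_or_neg_one {ι : Type*} (s : Finset ι) {f : ι → ℝ}
    (hf : ∀ i, f i = 1 ∨ f i = -1) : ∏ i ∈ s, f i = 1 ∨ ∏ i ∈ s, f i = -1 := by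
  classical
  induction s using Finset.induction_on with
  | empty => simp
  | insert a s ha ih =>
    rw [prod_insert ha]
    rcases hf a with h | h <;> rcases ih with h' | h' <;> rw [h, h'] <;> norm_num

lemma mul_eq_one_or_neg_one {a b : ℝ} (ha : a = 1 ∨ a = -1) (hb : b = 1 ∨ b = -1) :
    a * b = 1 ∨ a * b = -1 := by
  rcases ha with h | h <;> rcases hb with h' | h' <;> rw [h, h'] <;> norm_num

open Classical in
lemma one_sub_two_mul_card_le_prod {n : ℕ} {x xh : Fin n → ℝ} (hx : ∀ i, x i = 1 ∨ x i = -1)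
    (hxh : ∀ i, xh i = 1 ∨ xh i = -1) (s : Finset (Fin n)) :
    1 - 2 * ((s.filter fun j => xh j ≠ x j).card : ℝ) ≤ ∏ j ∈ s, x j * xh j := by
  rcases (s.filter fun j => xh j ≠ x j).eq_empty_or_nonempty with h | h
  · have hprod : ∏ j ∈ s, x j * xh j = 1 := by
      refine prod_eq_one fun j hj => ?_
      have hj' : xh j = x j := by
        by_contra hne
        exact filter_eq_empty_iff.1 h hj hne
      rw [hj']
      rcases hx j with h | h <;> rw [h] <;> norm_num
    rw [h, hprod]
    simp
  · have hcard : (1 : ℝ) ≤ ((s.filter fun j => xh j ≠ x j).card : ℝ) := by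
      exact_mod_cast h.card_pos
    rcases prod_eq_one_or_neg_one s (fun j => mul_eq_one_or_neg_one (hx j) (hxh j)) with h | h <;>
      rw [h] <;> linarith

lemma card_kset_mem {n k : ℕ} (hk : 1 ≤ k) (i : Fin n) :
    (univ.filter fun α : KSet n k => i ∈ α.1).card = (n - 1).choose (k - 1) := by
  simpa using card_kset_superset (k := k) {i} (by simpa using hk)

open Classical in
lemma sum_card_mismatch_le {n k : ℕ} (hk : 2 ≤ k) (x xh : Fin n → ℝ) (i : Fin n) :
    ∑ α : KSet n k with i ∈ α.1, ((α.1.erase i).filter fun j => xh j ≠ x j).card ≤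
      (univ.filter fun j => xh j ≠ x j).card * (n - 2).choose (k - 2) := by
  simp_rw [card_filter (fun j => xh j ≠ x j) (Finset.erase _ i)]
  calc ∑ α : KSet n k with i ∈ α.1, ∑ j ∈ α.1.erase i, (if xh j ≠ x j then 1 else 0)
      = ∑ j ∈ univ.erase i, ∑ α : KSet n k with i ∈ α.1 ∧ j ∈ α.1,
          (if xh j ≠ x j then 1 else 0) := by
        refine sum_comm' fun α j => ?_
        simp only [mem_filter, mem_univ, true_and, mem_erase]
        tauto
    _ = ∑ j ∈ univ.erase i, (if xh j ≠ x j then 1 else 0) * (n - 2).choose (k - 2) := by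
        refine sum_congr rfl fun j hj => ?_
        have hij : ({i, j} : Finset (Fin n)).card = 2 := card_pair (ne_of_mem_erase hj).symm
        have hcount := card_kset_superset (k := k) {i, j} (hij.trans_le hk)
        rw [hij] at hcount
        simp only [insert_subset_iff, singleton_subset_iff] at hcount
        rw [sum_const, hcount, smul_eq_mul, mul_comm]
    _ ≤ ∑ j, (if xh j ≠ x j then 1 else 0) * (n - 2).choose (k - 2) :=
        sum_le_sum_of_subset (subset_univ _)
    _ = _ := by rw [← sum_mul, card_filter]

open Classical in
/-- If at most `n / (4k)` coordinates mismatch, the mean vote keeps half of its full strength. -/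
lemma half_choose_le_sum_voteCoeff {n k : ℕ} (hk : 2 ≤ k) (hkn : k ≤ n) {x xh : Fin n → ℝ}
    (hx : ∀ i, x i = 1 ∨ x i = -1) (hxh : ∀ i, xh i = 1 ∨ xh i = -1)
    (hB : ((univ.filter fun j => xh j ≠ x j).card : ℝ) ≤ (n : ℝ) / (4 * k)) (i : Fin n) :
    ((n - 1).choose (k - 1) : ℝ) / 2 ≤ ∑ α : KSet n k, voteCoeff x xh i α := by
  set B : ℝ := ((univ.filter fun j => xh j ≠ x j).card : ℝ) with hBdef
  have hlow : ((n - 1).choose (k - 1) : ℝ) - 2 * (B * (n - 2).choose (k - 2)) ≤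
      ∑ α : KSet n k, voteCoeff x xh i α := by
    have hmis : ((∑ α : KSet n k with i ∈ α.1,
        ((α.1.erase i).filter fun j => xh j ≠ x j).card : ℕ) : ℝ) ≤
          B * (n - 2).choose (k - 2) := by
      rw [hBdef]
      exact_mod_cast sum_card_mismatch_le hk x xh i
    calc ((n - 1).choose (k - 1) : ℝ) - 2 * (B * (n - 2).choose (k - 2))
        ≤ ((univ.filter fun α : KSet n k => i ∈ α.1).card : ℝ) - 2 * ((∑ α : KSet n k with i ∈ α.1,
            ((α.1.erase i).filter fun j => xh j ≠ x j).card : ℕ) : ℝ) := by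
          rw [card_kset_mem (by omega) i]
          linarith
      _ = ∑ α : KSet n k with i ∈ α.1,
            (1 - 2 * (((α.1.erase i).filter fun j => xh j ≠ x j).card : ℝ)) := by
          rw [sum_sub_distrib, ← mul_sum]
          simp
      _ ≤ ∑ α : KSet n k with i ∈ α.1, ∏ j ∈ α.1.erase i, x j * xh j :=
          sum_le_sum fun α _ => one_sub_two_mul_card_le_prod hx hxh _
      _ = ∑ α : KSet n k, voteCoeff x xh i α := by
          rw [sum_filter]
          rfl
  obtain ⟨k, rfl⟩ : ∃ l, k = l + 2 := ⟨k - 2, by omega⟩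
  obtain ⟨n, rfl⟩ : ∃ m, n = m + 2 := ⟨n - 2, by omega⟩
  have hrec : ((n : ℝ) + 1) * (n.choose k : ℝ) = ((n + 1).choose (k + 1) : ℝ) * (k + 1) := by
    exact_mod_cast Nat.add_one_mul_choose_eq n k
  have hkn' : (k : ℝ) ≤ n := by
    have : k ≤ n := by omega
    exact_mod_cast this
  have hk0 : (0 : ℝ) ≤ k := k.cast_nonneg
  simp only [Nat.add_sub_cancel, show n + 2 - 1 = n + 1 by omega,
    show k + 2 - 1 = k + 1 by omega] at hlow ⊢
  rw [le_div_iff₀ (by positivity)] at hB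
  push_cast at hB
  have hB' : 4 * (B * (k + 1)) ≤ n + 1 := by
    have : 4 * (B * (k + 1)) * (k + 2) ≤ (n + 1) * (k + 2) := by nlinarith
    exact le_of_mul_le_mul_right this (by positivity)
  have hN : (0 : ℝ) ≤ ((n + 1).choose (k + 1) : ℝ) := Nat.cast_nonneg _
  have hfin : 4 * (B * (n.choose k : ℝ)) ≤ ((n + 1).choose (k + 1) : ℝ) := by
    have : 4 * (B * (n.choose k : ℝ)) * (n + 1) ≤ ((n + 1).choose (k + 1) : ℝ) * (n + 1) := by
      calc 4 * (B * (n.choose k : ℝ)) * (n + 1)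
          = ((n + 1).choose (k + 1) : ℝ) * (4 * (B * (k + 1))) := by
            linear_combination 4 * B * hrec
        _ ≤ _ := mul_le_mul_of_nonneg_left hB' hN
    exact le_of_mul_le_mul_right this (by positivity)
  linarith

lemma cosh_sub_one_sub_sinh_le {δ : ℝ} (hδ0 : 0 ≤ δ) (hδ1 : δ ≤ 1) :
    Real.cosh (δ / 4) - 1 - δ * Real.sinh (δ / 4) / 2 ≤ -(δ ^ 2 / 16) := by
  have habs : |δ / 4| ≤ 1 := by rw [abs_of_nonneg (by positivity)]; linarith
  have h₁ := (abs_le.1 (Real.abs_exp_sub_one_sub_id_le habs)).2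
  have h₂ := (abs_le.1 (Real.abs_exp_sub_one_sub_id_le (x := -(δ / 4)) (by rwa [abs_neg]))).2
  have hsinh : δ / 4 ≤ Real.sinh (δ / 4) := Real.self_le_sinh_iff.2 (by positivity)
  have hmul := mul_le_mul_of_nonneg_left hsinh hδ0
  have hcosh : Real.cosh (δ / 4) - 1 ≤ (δ / 4) ^ 2 := by
    rw [Real.cosh_eq]
    linarith [neg_sq (δ / 4)]
  linarith

open Classical in
/-- Exponential moment bound for a single vote. -/
lemma sum_prod_pWeight_mul_exp_vote_le {n k : ℕ} (hk : 2 ≤ k) (hkn : k ≤ n) {p δ : ℝ}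
    (hp0 : 0 ≤ p) (hp1 : p ≤ 1) (hδ0 : 0 ≤ δ) (hδ1 : δ ≤ 1) {x xh : Fin n → ℝ}
    (hx : ∀ i, x i = 1 ∨ x i = -1) (hxh : ∀ i, xh i = 1 ∨ xh i = -1)
    (hB : ((univ.filter fun j => xh j ≠ x j).card : ℝ) ≤ (n : ℝ) / (4 * k)) (i : Fin n) :
    ∑ ω : KSet n k → Fin 3, (∏ α, pWeight p δ (ω α)) *
        Real.exp (-(δ / 4) * (x i * Tclean n k x xh ω i)) ≤
      Real.exp (-(p * (n - 1).choose (k - 1) * δ ^ 2 / 16)) := by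
  simp_rw [mul_Tclean xh hx]
  refine (sum_prod_pWeight_mul_exp_le hp0 hp1 hδ0 hδ1 (δ / 4) (voteCoeff x xh i)).trans
    (Real.exp_le_exp.2 ?_)
  have hterm : ∀ α : KSet n k, Real.cosh (δ / 4 * voteCoeff x xh i α) - 1 -
      δ * Real.sinh (δ / 4 * voteCoeff x xh i α) =
        (if i ∈ α.1 then Real.cosh (δ / 4) - 1 else 0) -
          δ * Real.sinh (δ / 4) * voteCoeff x xh i α := by
    intro α
    unfold voteCoeff
    split_ifs
    · rcases prod_eq_one_or_neg_one (α.1.erase i)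
        (fun j => mul_eq_one_or_neg_one (hx j) (hxh j)) with h | h <;> rw [h] <;> simp
    · simp
  simp_rw [hterm]
  rw [sum_sub_distrib, ← mul_sum, ← sum_filter, sum_const, card_kset_mem (by omega), nsmul_eq_mul]
  have hmean := half_choose_le_sum_voteCoeff hk hkn hx hxh hB i
  have hsinh : 0 ≤ δ * Real.sinh (δ / 4) :=
    mul_nonneg hδ0 (Real.sinh_nonneg_iff.2 (by positivity))
  have hmul := mul_le_mul_of_nonneg_left hmean hsinh
  have hnum := mul_le_mul_of_nonneg_left (cosh_sub_one_sub_sinh_le hδ0 hδ1)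
    (Nat.cast_nonneg (α := ℝ) ((n - 1).choose (k - 1)))
  have hsum : ((n - 1).choose (k - 1) : ℝ) * (Real.cosh (δ / 4) - 1) -
      δ * Real.sinh (δ / 4) * ∑ α : KSet n k, voteCoeff x xh i α ≤
        ((n - 1).choose (k - 1) : ℝ) * -(δ ^ 2 / 16) := by linarith
  calc _ ≤ p * (((n - 1).choose (k - 1) : ℝ) * -(δ ^ 2 / 16)) :=
        mul_le_mul_of_nonneg_left hsum hp0
    _ = _ := by ring

lemma mul_nonpos_of_sign_ne {sg : ℝ → ℝ} (hpos : ∀ t, 0 < t → sg t = 1)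
    (hneg : ∀ t, t < 0 → sg t = -1) {a t : ℝ} (ha : a = 1 ∨ a = -1) (h : sg t ≠ a) :
    a * t ≤ 0 := by
  by_contra! hlt
  rcases ha with rfl | rfl
  · exact h (hpos t (by linarith))
  · exact h (hneg t (by linarith))

/-- The expected number of sampled constraints through a coordinate is at least `3 n^{0.1}`. -/
lemma three_mul_rpow_le_mean_degree {n k : ℕ} (hk : 3 ≤ k) (hkn : k ≤ n) :
    3 * (n : ℝ) ^ (0.1 : ℝ) ≤
      (⌈(n : ℝ) ^ (1.1 : ℝ)⌉₊ : ℝ) / (n.choose k : ℝ) * (n - 1).choose (k - 1) := by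
  have hchoose : (0 : ℝ) < n.choose k := by exact_mod_cast Nat.choose_pos hkn
  have hn : (0 : ℝ) < n := by
    have : 0 < n := by omega
    exact_mod_cast this
  have hceil : (n : ℝ) ^ (0.1 : ℝ) * n ≤ (⌈(n : ℝ) ^ (1.1 : ℝ)⌉₊ : ℝ) := by
    refine le_trans (le_of_eq ?_) (Nat.le_ceil _)
    rw [← Real.rpow_add_one hn.ne']
    norm_num
  have hrec : (n : ℝ) * ((n - 1).choose (k - 1) : ℝ) = (n.choose k : ℝ) * k := by
    obtain ⟨l, rfl⟩ : ∃ l, k = l + 1 := ⟨k - 1, by omega⟩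
    obtain ⟨m, rfl⟩ : ∃ m, n = m + 1 := ⟨n - 1, by omega⟩
    exact_mod_cast Nat.add_one_mul_choose_eq m l
  have hk' : (3 : ℝ) ≤ k := by exact_mod_cast hk
  have hpow : 0 ≤ (n : ℝ) ^ (0.1 : ℝ) := by positivity
  rw [div_mul_eq_mul_div, le_div_iff₀ hchoose]
  calc 3 * (n : ℝ) ^ (0.1 : ℝ) * n.choose k ≤ k * (n : ℝ) ^ (0.1 : ℝ) * n.choose k := by gcongr
    _ = (n : ℝ) ^ (0.1 : ℝ) * n * (n - 1).choose (k - 1) := by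
      linear_combination -(n : ℝ) ^ (0.1 : ℝ) * hrec
    _ ≤ _ := by gcongr

open Classical in
/-- Clean-up lemma: there are constants `C > 0` and `n₀` such that for all
`n ≥ n₀`, `k ≥ 3`, bias `δ ∈ (0,1]` with `δ² n^{0.1} ≥ C log n`, planted `x ∈ {±1}^n` and
estimate `x̂ ∈ {±1}^n` with at most `n/(4k)` mismatches, a fresh Bernoulli clean-up sample
with `m' = ⌈n^{1.1}⌉` expected constraints, followed by coordinate-wise sign votes, recovers
`x` exactly with probability at least `1 − n^{−10}`. (The inclusion probability is
`p' = m'/binom(n,k)`, and any fixed tie-breaking rule `sg` at `0` is allowed.) -/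
theorem stmt10 : ∃ C : ℝ, 0 < C ∧ ∃ n₀ : ℕ, ∀ n k : ℕ, n₀ ≤ n → 3 ≤ k →
    ∀ δ : ℝ, 0 < δ → δ ≤ 1 → C * Real.log n ≤ δ ^ 2 * (n : ℝ) ^ (0.1 : ℝ) →
    ⌈(n : ℝ) ^ (1.1 : ℝ)⌉₊ ≤ n.choose k →
    ∀ x xh : Fin n → ℝ, (∀ i, x i = 1 ∨ x i = -1) → (∀ i, xh i = 1 ∨ xh i = -1) →
    (Nat.card {j : Fin n // xh j ≠ x j} : ℝ) ≤ (n : ℝ) / (4 * k) →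
    ∀ sg : ℝ → ℝ, (∀ t, 0 < t → sg t = 1) → (∀ t, t < 0 → sg t = -1) →
      (sg 0 = 1 ∨ sg 0 = -1) →
    1 - (n : ℝ) ^ (-(10 : ℝ)) ≤
      ∑ ω : KSet n k → Fin 3,
        (∏ α : KSet n k,
            pWeight ((⌈(n : ℝ) ^ (1.1 : ℝ)⌉₊ : ℝ) / (n.choose k : ℝ)) δ (ω α)) *
          (if ∀ i : Fin n, sg (Tclean n k x xh ω i) = x i then 1 else 0) := by
  refine ⟨64, by norm_num, 1, ?_⟩
  intro n k hn hk δ hδ0 hδ1 hC hm x xh hx hxh hB sg hpos hneg _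
  have hn0 : (0 : ℝ) < n := by exact_mod_cast hn
  have hn1 : (1 : ℝ) ≤ n := by exact_mod_cast hn
  have hceil : 0 < ⌈(n : ℝ) ^ (1.1 : ℝ)⌉₊ := Nat.ceil_pos.2 (by positivity)
  have hchoose : 0 < n.choose k := hceil.trans_le hm
  have hkn : k ≤ n := by
    by_contra! hlt
    exact hchoose.ne' (Nat.choose_eq_zero_of_lt hlt)
  have hdeg := three_mul_rpow_le_mean_degree hk hkn
  set p : ℝ := (⌈(n : ℝ) ^ (1.1 : ℝ)⌉₊ : ℝ) / (n.choose k : ℝ) with hp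
  have hp0 : 0 ≤ p := by positivity
  have hp1 : p ≤ 1 := by
    rw [hp, div_le_one (by exact_mod_cast hchoose)]
    exact_mod_cast hm
  have hB' : ((univ.filter fun j => xh j ≠ x j).card : ℝ) ≤ (n : ℝ) / (4 * k) := by
    rwa [Nat.card_eq_fintype_card, Fintype.card_subtype] at hB
  have hvote : ∀ i, ∑ ω : KSet n k → Fin 3, (∏ α, pWeight p δ (ω α)) *
      Real.exp (-(δ / 4) * (x i * Tclean n k x xh ω i)) ≤ (n : ℝ) ^ (-(11 : ℝ)) := by
    intro i
    refine (sum_prod_pWeight_mul_exp_vote_le (by omega) hkn hp0 hp1 hδ0.le hδ1 hx hxh hB' i).trans ?_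
    rw [Real.rpow_def_of_pos hn0]
    refine Real.exp_le_exp.2 ?_
    have hmul := mul_le_mul_of_nonneg_left hdeg (sq_nonneg δ)
    have hlog := Real.log_nonneg hn1
    linarith
  have hunion : ∀ ω : KSet n k → Fin 3,
      1 - ∑ i, Real.exp (-(δ / 4) * (x i * Tclean n k x xh ω i)) ≤
        if ∀ i : Fin n, sg (Tclean n k x xh ω i) = x i then 1 else 0 := by
    intro ω
    split_ifs with h
    · have : 0 ≤ ∑ i, Real.exp (-(δ / 4) * (x i * Tclean n k x xh ω i)) :=
        sum_nonneg fun i _ => (Real.exp_pos _).le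
      linarith
    · obtain ⟨i, hi⟩ := not_forall.1 h
      have hle := mul_nonpos_of_sign_ne hpos hneg (hx i) hi
      have hexp : 1 ≤ Real.exp (-(δ / 4) * (x i * Tclean n k x xh ω i)) :=
        Real.one_le_exp (mul_nonneg_of_nonpos_of_nonpos (by linarith) hle)
      have := single_le_sum (f := fun i => Real.exp (-(δ / 4) * (x i * Tclean n k x xh ω i)))
        (fun i _ => (Real.exp_pos _).le) (mem_univ i)
      linarith
  have htotal : ∑ i : Fin n, ∑ ω : KSet n k → Fin 3, (∏ α, pWeight p δ (ω α)) *
      Real.exp (-(δ / 4) * (x i * Tclean n k x xh ω i)) ≤ (n : ℝ) ^ (-(10 : ℝ)) := by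
    calc _ ≤ ∑ _i : Fin n, (n : ℝ) ^ (-(11 : ℝ)) := sum_le_sum fun i _ => hvote i
      _ = (n : ℝ) ^ (-(11 : ℝ)) * n := by simp [mul_comm]
      _ = (n : ℝ) ^ (-(10 : ℝ)) := by
        rw [← Real.rpow_add_one hn0.ne']
        norm_num
  calc 1 - (n : ℝ) ^ (-(10 : ℝ))
      ≤ 1 - ∑ i : Fin n, ∑ ω : KSet n k → Fin 3, (∏ α, pWeight p δ (ω α)) *
          Real.exp (-(δ / 4) * (x i * Tclean n k x xh ω i)) := by linarith
    _ = ∑ ω : KSet n k → Fin 3, (∏ α, pWeight p δ (ω α)) *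
          (1 - ∑ i, Real.exp (-(δ / 4) * (x i * Tclean n k x xh ω i))) := by
        simp_rw [mul_sub, mul_one, mul_sum]
        rw [sum_sub_distrib, sum_prod_pWeight, sum_comm]
    _ ≤ _ := sum_le_sum fun ω _ => mul_le_mul_of_nonneg_left (hunion ω)
        (prod_nonneg fun α _ => pWeight_nonneg hp0 hp1 hδ0.le hδ1 _)
end

section
/- Fix k ≥ 3 and set C_k := e^{k/2+2} · k^{(k+1)/2} / k!. Then for every n ≥ 1, every integer D with 1 ≤ D ≤ n/k, and every real y ≥ 0: Σ_{t=0}^{D} N_t · y^t ≤ 1 + Σ_{t=1}^{D} (C_k · n^{k/2} · t^{k/2−1} · y)^t. Moreover, if q := C_k · n^{k/2} · D^{k/2−1} · y < 1, then Σ_{t=0}^{D} N_t · y^t ≤ 1/(1 − q). -/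
open Finset

/-- `N_t`: the number of simple even `k`-uniform hypergraphs on `[n]` with exactly `t`
edges, i.e. sets of `t` distinct `k`-subsets of `[n]` in which every vertex lies in an even
number of members. -/
noncomputable def Ncount (n k t : ℕ) : ℕ :=
  Nat.card {S : Finset (Finset (Fin n)) //
    (∀ α ∈ S, α.card = k) ∧ S.card = t ∧
    ∀ i : Fin n, Even ((S.filter (fun α => i ∈ α)).card)}

/-- The constant `C_k = e^{k/2+2} k^{(k+1)/2} / k!`. -/
noncomputable def Ck (k : ℕ) : ℝ :=
  Real.exp ((k : ℝ) / 2 + 2) * (k : ℝ) ^ (((k : ℝ) + 1) / 2) / (k.factorial : ℝ)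

/-- Averaging the power `(∑ i, ε i) ^ |ι|` over all sign vectors `ε` counts the words
`ι → Fin n` in which every letter occurs an even number of times. -/
lemma sum_signs_pow_card (ι : Type*) [Fintype ι] (n : ℕ) :
    ∑ ε ∈ Fintype.piFinset (fun _ : Fin n => ({1, -1} : Finset ℝ)),
        (∑ i, ε i) ^ Fintype.card ι =
      2 ^ n * (Nat.card {w : ι → Fin n // ∀ i, Even (#{p | w p = i})} : ℝ) := by
  classical
  have hexp : ∀ ε : Fin n → ℝ, (∑ i, ε i) ^ Fintype.card ι =
      ∑ w : ι → Fin n, ∏ i, ε i ^ #{p | w p = i} := by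
    intro ε
    have h := Finset.prod_univ_sum (fun _ : ι => (univ : Finset (Fin n))) (fun _ i => ε i)
    rw [Finset.prod_const, Finset.card_univ, Fintype.piFinset_univ] at h
    rw [h]
    refine Finset.sum_congr rfl fun w _ => ?_
    rw [← Finset.prod_fiberwise' univ w]
    simp
  have havg : ∀ w : ι → Fin n,
      ∑ ε ∈ Fintype.piFinset (fun _ : Fin n => ({1, -1} : Finset ℝ)),
        ∏ i, ε i ^ #{p | w p = i} =
      if ∀ i, Even (#{p | w p = i}) then 2 ^ n else 0 := by
    intro w
    rw [← Finset.prod_univ_sum (fun _ : Fin n => ({1, -1} : Finset ℝ))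
      (fun i x => x ^ #{p | w p = i})]
    have hne : (1 : ℝ) ≠ -1 := by norm_num
    simp only [Finset.sum_pair hne, one_pow]
    split_ifs with h
    · rw [Finset.prod_congr rfl (g := fun _ => (2 : ℝ))]
      · simp
      · intro i _
        rw [(h i).neg_one_pow]
        norm_num
    · push Not at h
      obtain ⟨i, hi⟩ := h
      refine Finset.prod_eq_zero (Finset.mem_univ i) ?_
      rw [(Nat.not_even_iff_odd.mp hi).neg_one_pow]
      norm_num
  rw [Finset.sum_congr rfl fun ε _ => hexp ε, Finset.sum_comm,
    Finset.sum_congr rfl fun w _ => havg w, ← Finset.sum_filter, Finset.sum_const,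
    Nat.card_eq_fintype_card, Fintype.card_subtype, nsmul_eq_mul, mul_comm]

lemma sum_signs_exp (n : ℕ) (x : ℝ) :
    ∑ ε ∈ Fintype.piFinset (fun _ : Fin n => ({1, -1} : Finset ℝ)),
        Real.exp (x * ∑ i, ε i) = (2 * Real.cosh x) ^ n := by
  have hne : (1 : ℝ) ≠ -1 := by norm_num
  have h := Finset.prod_univ_sum (fun _ : Fin n => ({1, -1} : Finset ℝ))
    (fun _ y => Real.exp (x * y))
  simp only [Finset.sum_pair hne, Finset.prod_const, Finset.card_univ, Fintype.card_fin] at h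
  have hc : Real.exp (x * 1) + Real.exp (x * -1) = 2 * Real.cosh x := by
    rw [Real.cosh_eq]; ring_nf
  rw [← hc, h]
  refine Finset.sum_congr rfl fun ε _ => ?_
  rw [Finset.mul_sum, Real.exp_sum]

/-- Chernoff-type bound for the number of words with all letter multiplicities even. -/
lemma card_even_words_mul_pow_le (ι : Type*) [Fintype ι] (n : ℕ) (x : ℝ) :
    (Nat.card {w : ι → Fin n // ∀ i, Even (#{p | w p = i})} : ℝ) * x ^ Fintype.card ι ≤
      2 * (Fintype.card ι).factorial * Real.exp (n * (x ^ 2 / 2)) := by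
  set m := Fintype.card ι
  have hterm : ∀ s : ℝ, s ^ m * x ^ m ≤
      m.factorial * (Real.exp (x * s) + Real.exp (-x * s)) := by
    intro s
    have h1 := Real.pow_div_factorial_le_exp (|x * s|) (abs_nonneg _) m
    rw [div_le_iff₀ (by positivity)] at h1
    have h2 : s ^ m * x ^ m ≤ |x * s| ^ m := by
      rw [← mul_pow, mul_comm s x, ← abs_pow]
      exact le_abs_self _
    have h3 : Real.exp |x * s| ≤ Real.exp (x * s) + Real.exp (-x * s) := by
      rw [neg_mul]
      exact Real.exp_abs_le _
    calc s ^ m * x ^ m ≤ Real.exp |x * s| * m.factorial := h2.trans h1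
      _ ≤ (Real.exp (x * s) + Real.exp (-x * s)) * m.factorial := by gcongr
      _ = _ := mul_comm _ _
  have hsum := Finset.sum_le_sum fun ε
    (_ : ε ∈ Fintype.piFinset (fun _ : Fin n => ({1, -1} : Finset ℝ))) => hterm (∑ i, ε i)
  rw [← Finset.sum_mul, sum_signs_pow_card ι n, ← Finset.mul_sum, Finset.sum_add_distrib,
    sum_signs_exp, sum_signs_exp, Real.cosh_neg, mul_pow] at hsum
  have hcosh : Real.cosh x ^ n ≤ Real.exp (n * (x ^ 2 / 2)) := by
    rw [Real.exp_nat_mul]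
    exact pow_le_pow_left₀ (Real.cosh_pos x).le (Real.cosh_le_exp_half_sq x) n
  have h2n : (0 : ℝ) < 2 ^ n := by positivity
  refine le_of_mul_le_mul_left ?_ h2n
  calc _ ≤ _ := (mul_assoc _ _ _).symm.le.trans hsum
    _ = 2 ^ n * (2 * m.factorial * Real.cosh x ^ n) := by ring
    _ ≤ _ := by gcongr

/-- Ordering the edges, and the vertices inside each edge, turns an even hypergraph into
`t! (k!)^t` distinct even words of length `t k`. -/
lemma Ncount_mul_factorial_le (n k t : ℕ) :
    Ncount n k t * (t.factorial * k.factorial ^ t) ≤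
      Nat.card {w : Fin t × Fin k → Fin n // ∀ i, Even (#{p | w p = i})} := by
  classical
  let H := {S : Finset (Finset (Fin n)) //
    (∀ α ∈ S, α.card = k) ∧ S.card = t ∧
    ∀ i : Fin n, Even ((S.filter (fun α => i ∈ α)).card)}
  let Ω := Σ S : H, Σ e : Fin t ≃ S.1, ∀ j, Fin k ≃ (e j).1
  have hcard : Nat.card Ω = Ncount n k t * (t.factorial * k.factorial ^ t) := by
    have hin : ∀ (S : H) (e : Fin t ≃ S.1),
        Nat.card (∀ j, Fin k ≃ (e j).1) = k.factorial ^ t := by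
      intro S e
      rw [Nat.card_pi]
      have : ∀ j, Nat.card (Fin k ≃ (e j).1) = k.factorial := by
        intro j
        rw [Nat.card_eq_fintype_card,
          Fintype.card_equiv (Finset.equivFinOfCardEq (S.2.1 _ (e j).2)).symm, Fintype.card_fin]
      rw [Finset.prod_congr rfl fun j _ => this j, Finset.prod_const, Finset.card_univ,
        Fintype.card_fin]
    have hout : ∀ S : H, Nat.card (Σ e : Fin t ≃ S.1, ∀ j, Fin k ≃ (e j).1) =
        t.factorial * k.factorial ^ t := by
      intro S
      rw [Nat.card_sigma, Finset.sum_congr rfl fun e _ => hin S e, Finset.sum_const,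
        Finset.card_univ, Fintype.card_equiv (Finset.equivFinOfCardEq S.2.2.1).symm,
        Fintype.card_fin, smul_eq_mul]
    rw [Nat.card_sigma, Finset.sum_congr rfl fun S _ => hout S, Finset.sum_const,
      Finset.card_univ, smul_eq_mul, ← Nat.card_eq_fintype_card]
    rfl
  rw [← hcard]
  let f : Ω → {w : Fin t × Fin k → Fin n // ∀ i, Even (#{p | w p = i})} := fun ω =>
    ⟨fun p => (ω.2.2 p.1 p.2).1, fun i => by
      obtain ⟨S, e, c⟩ := ω
      have : #{p : Fin t × Fin k | (c p.1 p.2).1 = i} = #(S.1.filter (fun α => i ∈ α)) := by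
        refine Finset.card_bij (fun p _ => (e p.1).1) ?_ ?_ ?_
        · intro p hp
          rw [Finset.mem_filter] at hp ⊢
          exact ⟨(e p.1).2, hp.2 ▸ (c p.1 p.2).2⟩
        · rintro ⟨j, l⟩ hp ⟨j', l'⟩ hq h
          obtain rfl : j = j' := e.injective (Subtype.ext h)
          rw [Finset.mem_filter] at hp hq
          have : c j l = c j l' := Subtype.ext (hp.2.trans hq.2.symm)
          rw [(c j).injective this]
        · intro α hα
          rw [Finset.mem_filter] at hα
          obtain ⟨j, hj⟩ := e.surjective ⟨α, hα.1⟩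
          have hi : i ∈ (e j).1 := by rw [hj]; exact hα.2
          obtain ⟨l, hl⟩ := (c j).surjective ⟨i, hi⟩
          exact ⟨(j, l), by simp [hl], by simp [hj]⟩
      change Even #{p : Fin t × Fin k | (c p.1 p.2).1 = i}
      rw [this]
      exact S.2.2.2 i⟩
  refine Nat.card_le_card_of_injective f ?_
  rintro ⟨⟨S, hS⟩, e, c⟩ ⟨⟨S', hS'⟩, e', c'⟩ h
  have hval : ∀ j l, (c j l).1 = (c' j l).1 := fun j l =>
    congrFun (congrArg Subtype.val h) (j, l)
  have hedge : ∀ j, (e j).1 = (e' j).1 := by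
    intro j
    ext i
    constructor
    · intro hi
      obtain ⟨l, hl⟩ := (c j).surjective ⟨i, hi⟩
      have := hval j l
      rw [hl] at this
      rw [show i = _ from this]
      exact (c' j l).2
    · intro hi
      obtain ⟨l, hl⟩ := (c' j).surjective ⟨i, hi⟩
      have := hval j l
      rw [hl] at this
      rw [show i = _ from this.symm]
      exact (c j l).2
  obtain rfl : S = S' := by
    ext α
    constructor
    · intro hα
      obtain ⟨j, hj⟩ := e.surjective ⟨α, hα⟩
      have := hedge j
      rw [hj] at this
      rw [show α = _ from this]
      exact (e' j).2
    · intro hα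
      obtain ⟨j, hj⟩ := e'.surjective ⟨α, hα⟩
      have := hedge j
      rw [hj] at this
      rw [show α = _ from this.symm]
      exact (e j).2
  obtain rfl : e = e' := Equiv.ext fun j => Subtype.ext (hedge j)
  obtain rfl : c = c' := funext fun j => Equiv.ext fun l => Subtype.ext (hval j l)
  rfl

lemma Ck_nonneg (k : ℕ) : 0 ≤ Ck k := by
  unfold Ck
  positivity

lemma Ncount_le (n k t : ℕ) (hn : 1 ≤ n) (hk : 1 ≤ k) (ht : 1 ≤ t) :
    (Ncount n k t : ℝ) ≤
      (Ck k * (n : ℝ) ^ ((k : ℝ) / 2) * (t : ℝ) ^ ((k : ℝ) / 2 - 1)) ^ t := by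
  have hn0 : (0 : ℝ) < n := by exact_mod_cast hn
  have hk0 : (0 : ℝ) < k := by exact_mod_cast hk
  have ht0 : (0 : ℝ) < t := by exact_mod_cast ht
  have hk1 : (1 : ℝ) ≤ k := by exact_mod_cast hk
  set x : ℝ := ((t : ℝ) * k / n) ^ (1 / 2 : ℝ) with hxdef
  have hx : 0 < x := by positivity
  have hx2 : x ^ 2 = t * k / n := by
    rw [hxdef, ← Real.sqrt_eq_rpow, Real.sq_sqrt (by positivity)]
  have hW := card_even_words_mul_pow_le (Fin t × Fin k) n x
  rw [Fintype.card_prod, Fintype.card_fin, Fintype.card_fin] at hW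
  have hN : (Ncount n k t : ℝ) * (t.factorial * k.factorial ^ t) ≤
      Nat.card {w : Fin t × Fin k → Fin n // ∀ i, Even (#{p | w p = i})} := by
    exact_mod_cast Ncount_mul_factorial_le n k t
  have hexp : Real.exp (n * (x ^ 2 / 2)) = Real.exp (k / 2) ^ t := by
    rw [← Real.exp_nat_mul, hx2]
    congr 1
    field_simp
  have hfact : ((t * k).factorial : ℝ) ≤ (((t : ℝ) * k) ^ k) ^ t := by
    rw [← pow_mul, mul_comm k t]
    exact_mod_cast Nat.factorial_le_pow (t * k)
  have htfact : (t : ℝ) ^ t ≤ Real.exp 1 ^ t * t.factorial := by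
    have h := Real.pow_div_factorial_le_exp (t : ℝ) ht0.le t
    rw [div_le_iff₀ (by positivity)] at h
    rwa [← Real.exp_nat_mul, mul_one]
  have htwo : (2 : ℝ) ≤ Real.exp 1 ^ t := by
    have h2 : (2 : ℝ) ≤ Real.exp 1 := by linarith [Real.add_one_le_exp (1 : ℝ)]
    exact h2.trans (le_self_pow₀ (by linarith) (by omega))
  have hxk : x ^ k * ((t : ℝ) ^ ((k : ℝ) / 2) * (k : ℝ) ^ ((k : ℝ) / 2) * (n : ℝ) ^ ((k : ℝ) / 2))
      = ((t : ℝ) * k) ^ k := by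
    rw [hxdef, ← Real.rpow_natCast (_ ^ _), ← Real.rpow_mul (by positivity),
      ← Real.mul_rpow (by positivity) (by positivity),
      ← Real.mul_rpow (by positivity) (by positivity),
      show (1 / 2 * (k : ℝ)) = k / 2 by ring,
      ← Real.mul_rpow (by positivity) (by positivity),
      show (t : ℝ) * k / n * (t * k * n) = (t * k) ^ (2 : ℝ) by
        rw [Real.rpow_two]; field_simp,
      ← Real.rpow_mul (by positivity), ← Real.rpow_natCast]
    congr 1
    ring
  have hbase : Real.exp 1 * Real.exp 1 * Real.exp (k / 2) *
      ((t : ℝ) ^ ((k : ℝ) / 2) * (k : ℝ) ^ ((k : ℝ) / 2) * (n : ℝ) ^ ((k : ℝ) / 2)) ≤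
      Ck k * (n : ℝ) ^ ((k : ℝ) / 2) * (t : ℝ) ^ ((k : ℝ) / 2 - 1) * (t * k.factorial) := by
    have hC : Ck k * k.factorial =
        Real.exp 1 * Real.exp 1 * Real.exp (k / 2) * (k : ℝ) ^ (((k : ℝ) + 1) / 2) := by
      unfold Ck
      rw [div_mul_cancel₀ _ (by positivity), ← Real.exp_add, ← Real.exp_add]
      ring_nf
    have htt : (t : ℝ) ^ ((k : ℝ) / 2 - 1) * t = (t : ℝ) ^ ((k : ℝ) / 2) := by
      rw [Real.rpow_sub_one ht0.ne', div_mul_cancel₀ _ ht0.ne']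
    have hkk : (k : ℝ) ^ ((k : ℝ) / 2) ≤ (k : ℝ) ^ (((k : ℝ) + 1) / 2) :=
      Real.rpow_le_rpow_of_exponent_le hk1 (by linarith)
    calc _ ≤ Real.exp 1 * Real.exp 1 * Real.exp (k / 2) *
          ((t : ℝ) ^ ((k : ℝ) / 2) * (k : ℝ) ^ (((k : ℝ) + 1) / 2) *
            (n : ℝ) ^ ((k : ℝ) / 2)) := by gcongr
      _ = (Ck k * k.factorial) * (n : ℝ) ^ ((k : ℝ) / 2) *
          ((t : ℝ) ^ ((k : ℝ) / 2 - 1) * t) := by rw [hC, htt]; ring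
      _ = _ := by ring
  set B := Ck k * (n : ℝ) ^ ((k : ℝ) / 2) * (t : ℝ) ^ ((k : ℝ) / 2 - 1)
  set G := (t : ℝ) ^ ((k : ℝ) / 2) * (k : ℝ) ^ ((k : ℝ) / 2) * (n : ℝ) ^ ((k : ℝ) / 2)
  have hpos : (0 : ℝ) < (t : ℝ) ^ t * k.factorial ^ t * (x ^ k) ^ t := by positivity
  refine le_of_mul_le_mul_right ?_ hpos
  calc (Ncount n k t : ℝ) * ((t : ℝ) ^ t * k.factorial ^ t * (x ^ k) ^ t)
      ≤ (Ncount n k t : ℝ) *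
          ((Real.exp 1 ^ t * t.factorial) * k.factorial ^ t * (x ^ k) ^ t) := by gcongr
    _ = Real.exp 1 ^ t *
          ((Ncount n k t * (t.factorial * k.factorial ^ t)) * x ^ (t * k)) := by
        rw [mul_comm t k, pow_mul]; ring
    _ ≤ Real.exp 1 ^ t * (2 * (t * k).factorial * Real.exp (n * (x ^ 2 / 2))) := by
        refine mul_le_mul_of_nonneg_left ?_ (by positivity)
        exact (mul_le_mul_of_nonneg_right hN (by positivity)).trans hW
    _ ≤ Real.exp 1 ^ t * (Real.exp 1 ^ t * (((t : ℝ) * k) ^ k) ^ t * Real.exp (k / 2) ^ t) := by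
        rw [hexp]; gcongr
    _ = (Real.exp 1 * Real.exp 1 * Real.exp (k / 2) * G) ^ t * (x ^ k) ^ t := by
        rw [← hxk]; simp only [mul_pow]; ring
    _ ≤ (B * (t * k.factorial)) ^ t * (x ^ k) ^ t := by gcongr
    _ = B ^ t * ((t : ℝ) ^ t * k.factorial ^ t * (x ^ k) ^ t) := by
        simp only [mul_pow]; ring

lemma Ncount_zero (n k : ℕ) : Ncount n k 0 = 1 := by
  unfold Ncount
  rw [Nat.card_eq_one_iff_exists]
  exact ⟨⟨∅, by simp⟩, fun ⟨S, hS⟩ => Subtype.ext (Finset.card_eq_zero.mp hS.2.1)⟩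

/-- For `k ≥ 3`, `1 ≤ D ≤ n/k` and `y ≥ 0`,
`Σ_{t=0}^{D} N_t y^t ≤ 1 + Σ_{t=1}^{D} (C_k n^{k/2} t^{k/2−1} y)^t`; moreover, if
`q = C_k n^{k/2} D^{k/2−1} y < 1`, then `Σ_{t=0}^{D} N_t y^t ≤ 1/(1−q)`. -/
theorem stmt13 (k : ℕ) (hk : 3 ≤ k) (n D : ℕ) (hn : 1 ≤ n) (hD : 1 ≤ D)
    (hDn : (D : ℝ) ≤ (n : ℝ) / (k : ℝ)) (y : ℝ) (hy : 0 ≤ y) :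
    (∑ t ∈ Finset.range (D + 1), (Ncount n k t : ℝ) * y ^ t
        ≤ 1 + ∑ t ∈ Finset.Icc 1 D,
            (Ck k * (n : ℝ) ^ ((k : ℝ) / 2) * (t : ℝ) ^ ((k : ℝ) / 2 - 1) * y) ^ t) ∧
    (Ck k * (n : ℝ) ^ ((k : ℝ) / 2) * (D : ℝ) ^ ((k : ℝ) / 2 - 1) * y < 1 →
      ∑ t ∈ Finset.range (D + 1), (Ncount n k t : ℝ) * y ^ t
        ≤ 1 / (1 - Ck k * (n : ℝ) ^ ((k : ℝ) / 2) * (D : ℝ) ^ ((k : ℝ) / 2 - 1) * y)) := by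
  have hle : ∑ t ∈ Finset.range (D + 1), (Ncount n k t : ℝ) * y ^ t
      ≤ 1 + ∑ t ∈ Finset.Icc 1 D,
          (Ck k * (n : ℝ) ^ ((k : ℝ) / 2) * (t : ℝ) ^ ((k : ℝ) / 2 - 1) * y) ^ t := by
    rw [Finset.range_eq_Ico, Finset.sum_eq_sum_Ico_succ_bot (by omega), Ncount_zero]
    simp only [Nat.cast_one, pow_zero, mul_one]
    gcongr 1 + ?_
    refine Finset.sum_le_sum fun t ht => ?_
    rw [mul_pow _ y]
    gcongr
    exact Ncount_le n k t hn (by omega) (Finset.mem_Icc.mp ht).1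
  refine ⟨hle, fun hq => hle.trans ?_⟩
  set q := Ck k * (n : ℝ) ^ ((k : ℝ) / 2) * (D : ℝ) ^ ((k : ℝ) / 2 - 1) * y with hqdef
  have hC := Ck_nonneg k
  have hq0 : 0 ≤ q := by positivity
  have hk2 : (0 : ℝ) ≤ (k : ℝ) / 2 - 1 := by
    have : (3 : ℝ) ≤ k := by exact_mod_cast hk
    linarith
  have hterm : ∑ t ∈ Finset.Icc 1 D,
      (Ck k * (n : ℝ) ^ ((k : ℝ) / 2) * (t : ℝ) ^ ((k : ℝ) / 2 - 1) * y) ^ t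
      ≤ ∑ t ∈ Finset.Icc 1 D, q ^ t := by
    refine Finset.sum_le_sum fun t ht => ?_
    rw [hqdef]
    have htD := (Finset.mem_Icc.mp ht).2
    gcongr
  have hgeom : 1 + ∑ t ∈ Finset.Icc 1 D, q ^ t = ∑ t ∈ Finset.range (D + 1), q ^ t := by
    rw [Finset.range_eq_Ico, Finset.sum_eq_sum_Ico_succ_bot (by omega), pow_zero]
    rfl
  calc _ ≤ 1 + ∑ t ∈ Finset.Icc 1 D, q ^ t := by gcongr
    _ = ∑ t ∈ Finset.range (D + 1), q ^ t := hgeom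
    _ ≤ ∑' t, q ^ t := (summable_geometric_of_lt_one hq0 hq).sum_le_tsum _
        fun t _ => pow_nonneg hq0 t
    _ = 1 / (1 - q) := by rw [tsum_geometric_of_lt_one hq0 hq, one_div]
end

section
/- Fix k ≥ 3. Then for every n ≥ 1 and every integer t with 1 ≤ t ≤ n/k, the number N_t of simple even k-uniform hypergraphs on [n] with exactly t edges satisfies N_t ≤ ( e^{k/2+2} · (k^{(k+1)/2} / k!) · n^{k/2} · t^{k/2−1} )^t. -/
open Finset

/-- The words `w : ι → β` in which every letter occurs an even number of times. -/
def evenWords (ι β : Type) [Fintype ι] [DecidableEq ι] [Fintype β] [DecidableEq β] :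
    Finset (ι → β) :=
  {w | ∀ b, Even (#{i | w i = b})}

lemma card_fiber_restrict {ι β : Type} [Fintype ι] [DecidableEq β]
    (w : ι → β) {i₀ j : ι} (hj : j ≠ i₀) (hw : w j = w i₀)
    [Fintype {x : ι // x ≠ i₀ ∧ x ≠ j}] (b : β) :
    #{i : ι | w i = b} =
      #{i : {x : ι // x ≠ i₀ ∧ x ≠ j} | w i = b} + if w i₀ = b then 2 else 0 := by
  classical
  have hmap : #{i : {x : ι // x ≠ i₀ ∧ x ≠ j} | w i = b} =
      #{i : ι | w i = b ∧ i ≠ i₀ ∧ i ≠ j} := by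
    rw [← card_map (Function.Embedding.subtype _)]
    congr 1
    ext x
    simp only [mem_map, mem_filter, mem_univ, true_and, Function.Embedding.subtype_apply,
      Subtype.exists, exists_and_left, exists_prop]
    constructor
    · rintro ⟨y, h1, h2, rfl⟩; exact ⟨h1, h2⟩
    · rintro ⟨h1, h2⟩; exact ⟨x, h1, h2, rfl⟩
  rw [hmap]
  split_ifs with h
  · rw [← card_pair hj, ← card_union_of_disjoint]
    · congr 1
      ext x
      simp only [mem_filter, mem_univ, true_and, mem_union, mem_insert, mem_singleton]
      constructor
      · intro hx; by_cases h1 : x = i₀ <;> by_cases h2 : x = j <;> simp_all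
      · rintro (hx | rfl | rfl)
        · exact hx.1
        · rw [hw, h]
        · exact h
    · rw [disjoint_left]
      intro x hx hx'
      simp only [mem_filter, mem_univ, true_and, mem_insert, mem_singleton] at hx hx'
      tauto
  · rw [add_zero]
    congr 1
    ext x
    simp only [mem_filter, mem_univ, true_and]
    constructor
    · intro hx
      refine ⟨hx, ?_, ?_⟩
      · rintro rfl; exact h hx
      · rintro rfl; exact h (hw ▸ hx)
    · exact fun hx => hx.1

/-- Deleting a position `i₀` together with another occurrence `j` of its letter. -/
lemma card_evenWords_le_sum {ι β : Type} [Fintype ι] [DecidableEq ι] [Fintype β] [DecidableEq β]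
    (i₀ : ι) :
    #(evenWords ι β) ≤ ∑ j ∈ univ.erase i₀,
      Fintype.card β * #(evenWords {x : ι // x ≠ i₀ ∧ x ≠ j} β) := by
  have hsub : evenWords ι β ⊆ (univ.erase i₀).biUnion fun j =>
      (evenWords ι β).filter fun w => w j = w i₀ := by
    intro w hw
    have hev : Even (#{i | w i = w i₀}) := by
      simp only [evenWords, mem_filter, mem_univ, true_and] at hw
      exact hw _
    have hmem : i₀ ∈ ({i | w i = w i₀} : Finset ι) := by simp
    have hlt : 1 < #{i | w i = w i₀} := by
      have := card_pos.2 ⟨i₀, hmem⟩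
      obtain ⟨r, hr⟩ := hev
      omega
    obtain ⟨j, hj, hne⟩ := exists_mem_ne hlt i₀
    simp only [mem_filter, mem_univ, true_and] at hj
    exact mem_biUnion.2 ⟨j, by simp [hne], by simp [hw, hj]⟩
  refine (card_le_card hsub).trans (card_biUnion_le.trans (sum_le_sum fun j hj => ?_))
  have hne : j ≠ i₀ := (mem_erase.1 hj).1
  rw [← card_univ (α := β), ← card_product]
  refine card_le_card_of_injOn (fun w => (w i₀, fun x => w x)) ?_ ?_
  · intro w hw
    simp only [coe_filter, Set.mem_ofPred_eq, evenWords, mem_filter, mem_univ, true_and] at hw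
    simp only [coe_product, Set.mem_prod, coe_univ, Set.mem_univ, true_and, evenWords,
      mem_coe, mem_filter, mem_univ]
    intro b
    have h := hw.1 b
    rw [card_fiber_restrict w hne hw.2] at h
    split_ifs at h
    · exact (Nat.even_add.1 h).2 even_two
    · simpa using h
  · intro w hw w' hw' h
    simp only [coe_filter, Set.mem_ofPred_eq] at hw hw'
    simp only [Prod.mk.injEq] at h
    funext x
    by_cases h1 : x = i₀
    · rw [h1, h.1]
    by_cases h2 : x = j
    · rw [h2, hw.2, hw'.2, h.1]
    · exact congrFun h.2 ⟨x, h1, h2⟩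

lemma sq_card_evenWords_le {β : Type} [Fintype β] [DecidableEq β] (L : ℕ) :
    ∀ (ι : Type) [Fintype ι] [DecidableEq ι], Fintype.card ι = L →
      #(evenWords ι β) ^ 2 ≤ (L * Fintype.card β) ^ L := by
  induction L using Nat.strong_induction_on with
  | _ L ih =>
    intro ι _ _ hL
    rcases Nat.eq_zero_or_pos L with rfl | hpos
    · have := Fintype.card_eq_zero_iff.1 hL
      have h1 : #(evenWords ι β) ≤ 1 := card_le_one_of_subsingleton _
      simpa using Nat.pow_le_pow_left h1 2
    obtain ⟨i₀⟩ : Nonempty ι := Fintype.card_pos_iff.1 (hL ▸ hpos)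
    have hsum := card_evenWords_le_sum (β := β) i₀
    have hcard : #((univ : Finset ι).erase i₀) = L - 1 := by
      rw [card_erase_of_mem (mem_univ _), card_univ, hL]
    obtain ⟨M, rfl⟩ | rfl : (∃ M, L = M + 2) ∨ L = 1 := by
      rcases L with _ | _ | M
      · omega
      · exact .inr rfl
      · exact .inl ⟨M, rfl⟩
    · set q := Fintype.card β
      have hsub : ∀ j ∈ (univ : Finset ι).erase i₀,
          #(evenWords {x : ι // x ≠ i₀ ∧ x ≠ j} β) ≤ Nat.sqrt (((M + 2) * q) ^ M) := by
        intro j hj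
        have hne : j ≠ i₀ := (mem_erase.1 hj).1
        have hc : Fintype.card {x : ι // x ≠ i₀ ∧ x ≠ j} = M := by
          rw [Fintype.card_subtype]
          have : ({x : ι | x ≠ i₀ ∧ x ≠ j} : Finset ι) = (univ.erase i₀).erase j := by
            ext x; simp [and_comm]
          rw [this, card_erase_of_mem hj, hcard]; omega
        rw [Nat.le_sqrt']
        refine (ih M (by omega) _ hc).trans ?_
        gcongr
        omega
      have hle : #(evenWords ι β) ≤ ((M + 2) * q) * Nat.sqrt (((M + 2) * q) ^ M) := by
        refine hsum.trans ((sum_le_card_nsmul _ _ _ fun j hj =>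
          Nat.mul_le_mul_left q (hsub j hj)).trans ?_)
        rw [hcard, smul_eq_mul, ← mul_assoc]
        gcongr
        omega
      calc #(evenWords ι β) ^ 2
          ≤ (((M + 2) * q) * Nat.sqrt (((M + 2) * q) ^ M)) ^ 2 := Nat.pow_le_pow_left hle 2
        _ = ((M + 2) * q) ^ 2 * (Nat.sqrt (((M + 2) * q) ^ M)) ^ 2 := mul_pow _ _ _
        _ ≤ ((M + 2) * q) ^ 2 * ((M + 2) * q) ^ M :=
          Nat.mul_le_mul_left _ (Nat.sqrt_le' _)
        _ = ((M + 2) * q) ^ (M + 2) := by ring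
    · rw [card_eq_zero.1 hcard, sum_empty, Nat.le_zero] at hsum
      rw [hsum]; simp

/-- A hypergraph with `t` edges of size `k` is listed by an injective family of edges, each
edge itself being listed injectively. -/
lemma exists_listing {n k t : ℕ} (S : Finset (Finset (Fin n)))
    (hS : ∀ α ∈ S, α.card = k) (ht : S.card = t) :
    ∃ g : Fin t → Fin k → Fin n, (∀ i, Function.Injective (g i)) ∧
      Function.Injective (fun i => univ.image (g i)) ∧
      univ.image (fun i => univ.image (g i)) = S := by
  let e := S.equivFinOfCardEq ht
  have hc : ∀ i, ((e.symm i : Finset (Fin n))).card = k := fun i => hS _ (e.symm i).2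
  have himg : ∀ i, univ.image (fun j => (e.symm i : Finset (Fin n)).orderEmbOfFin (hc i) j)
      = (e.symm i : Finset (Fin n)) := by
    intro i
    ext x
    rw [← mem_coe, coe_image, coe_univ, Set.image_univ, range_orderEmbOfFin, mem_coe]
  refine ⟨fun i j => (e.symm i : Finset (Fin n)).orderEmbOfFin (hc i) j,
    fun i => (orderEmbOfFin _ (hc i)).injective, ?_, ?_⟩
  · intro i i' h
    simp only [himg] at h
    exact e.symm.injective (Subtype.ext h)
  · simp only [himg]
    ext α
    simp only [mem_image, mem_univ, true_and]
    constructor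
    · rintro ⟨i, rfl⟩; exact (e.symm i).2
    · intro h; exact ⟨e ⟨α, h⟩, by simp⟩

/-- Ordering the edges, and the vertices inside each edge, turns even hypergraphs into even
words of length `t * k`. -/
lemma Ncount_mul_le (n k t : ℕ) :
    Ncount n k t * (t.factorial * k.factorial ^ t) ≤ #(evenWords (Fin t × Fin k) (Fin n)) := by
  classical
  let X := {S : Finset (Finset (Fin n)) //
    (∀ α ∈ S, α.card = k) ∧ S.card = t ∧
    ∀ i : Fin n, Even ((S.filter (fun α => i ∈ α)).card)}
  choose g hg hinj himg using fun S : X => exists_listing S.1 S.2.1 S.2.2.1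
  let Φ : X × (Equiv.Perm (Fin t) × (Fin t → Equiv.Perm (Fin k))) → (Fin t × Fin k → Fin n) :=
    fun p x => g p.1 (p.2.1 x.1) (p.2.2 x.1 x.2)
  have hrow : ∀ p i, univ.image (fun j => Φ p (i, j)) = univ.image (g p.1 (p.2.1 i)) := by
    intro p i
    ext x
    simp only [mem_image, mem_univ, true_and, Φ]
    exact (p.2.2 i).exists_congr_left.trans (by simp)
  have hall : ∀ p, univ.image (fun i => univ.image (fun j => Φ p (i, j))) = p.1.1 := by
    intro p
    rw [← himg p.1]
    ext x
    simp only [hrow, mem_image, mem_univ, true_and]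
    exact p.2.1.exists_congr_left.trans (by simp)
  have hΦ : Function.Injective Φ := by
    rintro ⟨S, π, τ⟩ ⟨S', π', τ'⟩ h
    have hS : S = S' := by
      apply Subtype.ext
      have h1 := hall (S, π, τ)
      rw [h, hall] at h1
      exact h1.symm
    subst hS
    have hπ : π = π' := by
      ext1 i
      apply hinj S
      have h1 := hrow (S, π, τ) i
      rw [h, hrow] at h1
      exact h1.symm
    subst hπ
    have hτ : τ = τ' := by
      funext i
      ext1 j
      exact hg S (π i) (congrFun h (i, j))
    rw [hτ]
  have hmem : ∀ p, Φ p ∈ evenWords (Fin t × Fin k) (Fin n) := by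
    intro p
    simp only [evenWords, mem_filter, mem_univ, true_and]
    intro b
    have hb := p.1.2.2.2 b
    convert hb using 1
    refine card_bij (fun x _ => univ.image (fun j => Φ p (x.1, j))) ?_ ?_ ?_
    · intro x hx
      simp only [mem_filter, mem_univ, true_and] at hx
      refine mem_filter.2 ⟨?_, ?_⟩
      · rw [← hall p]; exact mem_image_of_mem _ (mem_univ x.1)
      · exact mem_image.2 ⟨x.2, mem_univ _, hx⟩
    · rintro ⟨i, j⟩ hx ⟨i', j'⟩ hx' h
      simp only [mem_filter, mem_univ, true_and] at hx hx'
      simp only [hrow] at h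
      have hi : i = i' := p.2.1.injective (hinj p.1 h)
      subst hi
      have hj : j = j' := (p.2.2 i).injective (hg p.1 _ (hx.trans hx'.symm))
      rw [hj]
    · intro α hα
      obtain ⟨h1, h2⟩ := mem_filter.1 hα
      rw [← hall p] at h1
      obtain ⟨i, -, rfl⟩ := mem_image.1 h1
      obtain ⟨j, -, hj⟩ := mem_image.1 h2
      exact ⟨(i, j), by simpa using hj, rfl⟩
  have hcard := card_le_card_of_injOn (s := univ) Φ (fun p _ => hmem p) hΦ.injOn
  rw [card_univ, Fintype.card_prod, Fintype.card_prod, Fintype.card_perm, Fintype.card_fun,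
    Fintype.card_perm, Fintype.card_fin, Fintype.card_fin] at hcard
  rw [Ncount, Nat.card_eq_fintype_card]
  exact hcard

/-- Counting bound for even hypergraphs: for `k ≥ 3` and `1 ≤ t ≤ n/k`,
`N_t ≤ (e^{k/2+2}·(k^{(k+1)/2}/k!)·n^{k/2}·t^{k/2−1})^t`. -/
theorem stmt14 (k : ℕ) (hk : 3 ≤ k) (n t : ℕ) (hn : 1 ≤ n) (ht : 1 ≤ t)
    (htn : (t : ℝ) ≤ (n : ℝ) / (k : ℝ)) :
    (Ncount n k t : ℝ)
      ≤ (Real.exp ((k : ℝ) / 2 + 2) * ((k : ℝ) ^ (((k : ℝ) + 1) / 2) / (k.factorial : ℝ))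
          * (n : ℝ) ^ ((k : ℝ) / 2) * (t : ℝ) ^ ((k : ℝ) / 2 - 1)) ^ t := by
  have hk0 : (0 : ℝ) < k := by positivity
  have hk1 : (1 : ℝ) ≤ k := by exact_mod_cast (by omega : 1 ≤ k)
  have hn0 : (0 : ℝ) < n := by exact_mod_cast hn
  have ht0 : (0 : ℝ) < t := by exact_mod_cast ht
  have hword : (#(evenWords (Fin t × Fin k) (Fin n)) : ℝ)
      ≤ (((t : ℝ) * k * n) ^ ((k : ℝ) / 2)) ^ t := by
    have h := sq_card_evenWords_le (β := Fin n) (t * k) (Fin t × Fin k) (by simp)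
    rw [Fintype.card_fin] at h
    refine (sq_le_sq₀ (by positivity) (by positivity)).1 ?_
    calc (#(evenWords (Fin t × Fin k) (Fin n)) : ℝ) ^ 2
        ≤ ((t : ℝ) * k * n) ^ (t * k) := by exact_mod_cast h
      _ = ((((t : ℝ) * k * n) ^ ((k : ℝ) / 2)) ^ t) ^ 2 := by
        rw [← pow_mul, ← Real.rpow_mul_natCast (by positivity), ← Real.rpow_natCast]
        congr 1
        push_cast
        ring
  have hcount : (Ncount n k t : ℝ) * (t.factorial * (k.factorial : ℝ) ^ t)
      ≤ (((t : ℝ) * k * n) ^ ((k : ℝ) / 2)) ^ t :=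
    le_trans (by exact_mod_cast Ncount_mul_le n k t) hword
  have hfact : (t : ℝ) ^ t ≤ t.factorial * Real.exp 1 ^ t := by
    have h := Real.pow_div_factorial_le_exp (t : ℝ) ht0.le t
    rw [div_le_iff₀ (by positivity)] at h
    rwa [← Real.exp_nat_mul, mul_one, mul_comm]
  have hbase : Real.exp 1 * ((t : ℝ) * k * n) ^ ((k : ℝ) / 2) / (t * k.factorial)
      ≤ Real.exp ((k : ℝ) / 2 + 2) * ((k : ℝ) ^ (((k : ℝ) + 1) / 2) / (k.factorial : ℝ))
          * (n : ℝ) ^ ((k : ℝ) / 2) * (t : ℝ) ^ ((k : ℝ) / 2 - 1) := by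
    have hexp : Real.exp 1 ≤ Real.exp ((k : ℝ) / 2 + 2) := Real.exp_le_exp.2 (by linarith)
    have hpow : (k : ℝ) ^ ((k : ℝ) / 2) ≤ (k : ℝ) ^ (((k : ℝ) + 1) / 2) :=
      Real.rpow_le_rpow_of_exponent_le hk1 (by linarith)
    calc Real.exp 1 * ((t : ℝ) * k * n) ^ ((k : ℝ) / 2) / (t * k.factorial)
        = Real.exp 1 * ((k : ℝ) ^ ((k : ℝ) / 2) / (k.factorial : ℝ))
          * (n : ℝ) ^ ((k : ℝ) / 2) * (t : ℝ) ^ ((k : ℝ) / 2 - 1) := by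
          rw [Real.mul_rpow (by positivity) hn0.le, Real.mul_rpow ht0.le hk0.le,
            Real.rpow_sub_one ht0.ne']
          field_simp
      _ ≤ _ := by gcongr
  refine le_trans ?_ (pow_le_pow_left₀ (by positivity) hbase t)
  rw [div_pow, mul_pow, mul_pow, le_div_iff₀ (by positivity)]
  calc (Ncount n k t : ℝ) * ((t : ℝ) ^ t * (k.factorial : ℝ) ^ t)
      ≤ Ncount n k t * ((t.factorial * Real.exp 1 ^ t) * (k.factorial : ℝ) ^ t) := by gcongr
    _ = Real.exp 1 ^ t * (Ncount n k t * (t.factorial * (k.factorial : ℝ) ^ t)) := by ring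
    _ ≤ _ := by gcongr
end

section
/- There exists a constant C > 0 such that for all integers n ≥ 1, v ≥ 1, and 0 ≤ i ≤ v with v² ≤ n, one has | binom(v,i)·binom(n−v, v−i) / binom(n,v) − (v)_i² / (i!·n^i) | ≤ C·(v²/n)·(v)_i² / (i!·n^i); in particular, binom(v,i)·binom(n−v, v−i)/binom(n,v) = (1 + O(v²/n))·(v)_i²/(i!·n^i) uniformly over 0 ≤ i ≤ v when v = o(√n). -/
/-- For `n > 0` the hypergeometric ratio is `(v)_i² / (i! n^i)` times an explicit correction. -/
lemma hypergeometric_ratio_eq {n v i : ℕ} (hn : 1 ≤ n) (hiv : i ≤ v) (hvn : v ≤ n) :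
    (v.choose i : ℝ) * ((n - v).choose (v - i) : ℝ) / (n.choose v : ℝ) =
      ((n : ℝ) ^ i * ((n - v).descFactorial (v - i) : ℝ) / (n.descFactorial v : ℝ)) *
        ((v.descFactorial i : ℝ) ^ 2 / ((i.factorial : ℝ) * (n : ℝ) ^ i)) := by
  have hn0 : (n : ℝ) ≠ 0 := by positivity
  have hd : (n.descFactorial v : ℝ) ≠ 0 := by
    exact_mod_cast (Nat.descFactorial_pos.2 hvn).ne'
  have hc : (n.choose v : ℝ) ≠ 0 := by exact_mod_cast (Nat.choose_pos hvn).ne'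
  have hi : (i.factorial : ℝ) ≠ 0 := by positivity
  have hvi : ((v - i).factorial : ℝ) ≠ 0 := by positivity
  have e1 : (v.descFactorial i : ℝ) = i.factorial * v.choose i := by
    exact_mod_cast Nat.descFactorial_eq_factorial_mul_choose v i
  have e2 : ((n - v).descFactorial (v - i) : ℝ) =
      (v - i).factorial * (n - v).choose (v - i) := by
    exact_mod_cast Nat.descFactorial_eq_factorial_mul_choose (n - v) (v - i)
  have e3 : (n.descFactorial v : ℝ) = v.factorial * n.choose v := by
    exact_mod_cast Nat.descFactorial_eq_factorial_mul_choose n v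
  have e4 : (v.factorial : ℝ) = v.choose i * i.factorial * (v - i).factorial := by
    exact_mod_cast (Nat.choose_mul_factorial_mul_factorial hiv).symm
  have hci : (v.choose i : ℝ) ≠ 0 := by exact_mod_cast (Nat.choose_pos hiv).ne'
  rw [e3, e1, e2, e4]
  field_simp

/-- Lower bound for the correction factor of the hypergeometric ratio. -/
lemma one_sub_mul_descFactorial_le {n v i : ℕ} (hn : 1 ≤ n) (hv : 1 ≤ v) (hiv : i ≤ v) :
    (1 - 2 * ((v : ℝ) ^ 2 / n)) * (n.descFactorial v : ℝ) ≤
      (n : ℝ) ^ i * ((n - v).descFactorial (v - i) : ℝ) := by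
  have hn0 : (0 : ℝ) < n := by positivity
  have hv1 : (1 : ℝ) ≤ v := by exact_mod_cast hv
  rcases lt_or_ge n (2 * v) with h | h
  · have h' : (n : ℝ) < 2 * v := by exact_mod_cast h
    have : 1 - 2 * ((v : ℝ) ^ 2 / n) ≤ 0 := by
      rw [sub_nonpos, ← mul_div_assoc, le_div_iff₀ hn0]
      nlinarith
    exact (mul_nonpos_of_nonpos_of_nonneg this (by positivity)).trans (by positivity)
  have h' : 2 * (v : ℝ) ≤ n := by exact_mod_cast h
  have hx : 2 * (v : ℝ) / n ≤ 1 := by rwa [div_le_one hn0]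
  have bern := one_add_mul_le_pow (a := -(2 * (v : ℝ) / n)) (by linarith) (v - i)
  have hk : ((v - i : ℕ) : ℝ) ≤ v := by exact_mod_cast Nat.sub_le v i
  have h1 : 1 - 2 * ((v : ℝ) ^ 2 / n) ≤ (1 + -(2 * (v : ℝ) / n)) ^ (v - i) := by
    have hpos : 0 ≤ 2 * (v : ℝ) / n := by positivity
    have : 2 * ((v : ℝ) ^ 2 / n) = v * (2 * (v : ℝ) / n) := by ring
    nlinarith
  have h2 : (n.descFactorial v : ℝ) ≤ (n : ℝ) ^ i * (n : ℝ) ^ (v - i) := by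
    rw [← pow_add, Nat.add_sub_cancel' hiv]
    exact_mod_cast Nat.descFactorial_le_pow n v
  have h3 : ((n : ℝ) - 2 * v) ^ (v - i) ≤ ((n - v).descFactorial (v - i) : ℝ) := by
    have : (n - 2 * v) ^ (v - i) ≤ (n - v).descFactorial (v - i) :=
      (Nat.pow_le_pow_left (by omega) _).trans (Nat.pow_sub_le_descFactorial (n - v) (v - i))
    have h4 : (((n - 2 * v : ℕ) : ℝ)) ^ (v - i) ≤ ((n - v).descFactorial (v - i) : ℝ) := by
      exact_mod_cast this
    rwa [Nat.cast_sub h, Nat.cast_mul, Nat.cast_ofNat] at h4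
  calc (1 - 2 * ((v : ℝ) ^ 2 / n)) * (n.descFactorial v : ℝ)
      ≤ (1 + -(2 * (v : ℝ) / n)) ^ (v - i) * ((n : ℝ) ^ i * (n : ℝ) ^ (v - i)) := by
        have : 0 ≤ 1 + -(2 * (v : ℝ) / n) := by linarith
        gcongr
    _ = (n : ℝ) ^ i * ((n : ℝ) - 2 * v) ^ (v - i) := by
        rw [mul_left_comm, ← mul_pow]
        congr 2
        field_simp
        ring
    _ ≤ _ := by gcongr

/-- Upper bound for the correction factor of the hypergeometric ratio. -/
lemma pow_mul_descFactorial_le {n v i : ℕ} (hn : 1 ≤ n) (hv : 1 ≤ v) (hiv : i ≤ v)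
    (hvn : v ^ 2 ≤ n) :
    (n : ℝ) ^ i * ((n - v).descFactorial (v - i) : ℝ) ≤
      (1 + 2 * Real.exp 2 * ((v : ℝ) ^ 2 / n)) * (n.descFactorial v : ℝ) := by
  have hn0 : (0 : ℝ) < n := by positivity
  have hv1 : (1 : ℝ) ≤ v := by exact_mod_cast hv
  have hvn' : (v : ℝ) ^ 2 ≤ n := by exact_mod_cast hvn
  have hle : v ≤ n := (Nat.le_self_pow two_ne_zero v).trans hvn
  have hiv' : (i : ℝ) ≤ v := by exact_mod_cast hiv
  have h0 : (0 : ℝ) ≤ (n : ℝ) + 1 - v := by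
    have : (v : ℝ) ≤ n := by exact_mod_cast hle
    linarith
  have hexp : Real.exp (2 * ((v : ℝ) ^ 2 / n)) ≤ 1 + 2 * Real.exp 2 * ((v : ℝ) ^ 2 / n) := by
    set t := 2 * ((v : ℝ) ^ 2 / n) with ht
    have ht0 : 0 ≤ t := by positivity
    have ht2 : t ≤ 2 := by
      have : (v : ℝ) ^ 2 / n ≤ 1 := by rwa [div_le_one hn0]
      linarith
    have h1 : 1 - t ≤ Real.exp (-t) := by linarith [Real.add_one_le_exp (-t)]
    have h2 : (1 - t) * Real.exp t ≤ 1 := by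
      have := mul_le_mul_of_nonneg_right h1 (Real.exp_pos t).le
      rwa [← Real.exp_add, neg_add_cancel, Real.exp_zero] at this
    have h3 : t * Real.exp t ≤ t * Real.exp 2 := by gcongr
    have h4 : 2 * Real.exp 2 * ((v : ℝ) ^ 2 / n) = t * Real.exp 2 := by rw [ht]; ring
    linarith
  have hbase : (n : ℝ) ≤ Real.exp (2 * v / n) * ((n : ℝ) + 1 - v) := by
    have h1 : (n : ℝ) ≤ (2 * v / n + 1) * ((n : ℝ) + 1 - v) := by
      have : (2 * v / n + 1) * ((n : ℝ) + 1 - v) - n =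
          ((v + 1) * n - 2 * v * (v - 1)) / n := by
        field_simp
        ring
      have h2 : 0 ≤ ((v + 1) * n - 2 * v * (v - 1)) / (n : ℝ) := by
        apply div_nonneg _ hn0.le
        nlinarith [mul_nonneg (by linarith : (0 : ℝ) ≤ v) (sq_nonneg ((v : ℝ) - 1))]
      linarith
    exact h1.trans (mul_le_mul_of_nonneg_right (Real.add_one_le_exp _) h0)
  have hpow : (n : ℝ) ^ i ≤ Real.exp (2 * ((v : ℝ) ^ 2 / n)) * ((n : ℝ) + 1 - v) ^ i := by
    calc (n : ℝ) ^ i ≤ (Real.exp (2 * v / n) * ((n : ℝ) + 1 - v)) ^ i := by gcongr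
      _ = Real.exp (i * (2 * v / n)) * ((n : ℝ) + 1 - v) ^ i := by
        rw [mul_pow, ← Real.exp_nat_mul]
      _ ≤ _ := by
        have : (i : ℝ) * (2 * v / n) ≤ 2 * ((v : ℝ) ^ 2 / n) :=
          calc (i : ℝ) * (2 * v / n) ≤ v * (2 * v / n) := by gcongr
            _ = 2 * ((v : ℝ) ^ 2 / n) := by ring
        exact mul_le_mul_of_nonneg_right (Real.exp_le_exp.2 this) (by positivity)
  have hdesc : ((n : ℝ) + 1 - v) ^ i * ((n - v).descFactorial (v - i) : ℝ) ≤
      (n.descFactorial v : ℝ) := by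
    have key : (n + 1 - v) ^ i * (n - v).descFactorial (v - i) ≤ n.descFactorial v := by
      rw [← Nat.descFactorial_mul_descFactorial (Nat.sub_le v i), Nat.sub_sub_self hiv]
      refine Nat.mul_le_mul ?_ (Nat.descFactorial_le _ (Nat.sub_le n v))
      exact (Nat.pow_le_pow_left (by omega) _).trans (Nat.pow_sub_le_descFactorial _ _)
    have hcast : ((n + 1 - v : ℕ) : ℝ) = (n : ℝ) + 1 - v := by
      rw [Nat.cast_sub (by omega)]
      push_cast
      ring
    rw [← hcast]
    exact_mod_cast key
  calc (n : ℝ) ^ i * ((n - v).descFactorial (v - i) : ℝ)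
      ≤ Real.exp (2 * ((v : ℝ) ^ 2 / n)) * ((n : ℝ) + 1 - v) ^ i *
          ((n - v).descFactorial (v - i) : ℝ) := by gcongr
    _ = Real.exp (2 * ((v : ℝ) ^ 2 / n)) *
          (((n : ℝ) + 1 - v) ^ i * ((n - v).descFactorial (v - i) : ℝ)) := by ring
    _ ≤ _ := mul_le_mul hexp hdesc (by positivity) (by positivity)

/-- Hypergeometric ratio asymptotics: there is an absolute constant
`C > 0` such that for all `n ≥ 1`, `v ≥ 1` and `0 ≤ i ≤ v` with `v² ≤ n`,
`| binom(v,i)·binom(n−v,v−i)/binom(n,v) − (v)_i²/(i!·n^i) |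
  ≤ C·(v²/n)·(v)_i²/(i!·n^i)`. -/
theorem stmt19 : ∃ C : ℝ, 0 < C ∧ ∀ n v i : ℕ, 1 ≤ n → 1 ≤ v → i ≤ v → v ^ 2 ≤ n →
    |((v.choose i : ℝ) * ((n - v).choose (v - i) : ℝ) / (n.choose v : ℝ))
        - ((v.descFactorial i : ℝ)) ^ 2 / ((i.factorial : ℝ) * (n : ℝ) ^ i)|
      ≤ C * ((v : ℝ) ^ 2 / (n : ℝ))
        * ((v.descFactorial i : ℝ)) ^ 2 / ((i.factorial : ℝ) * (n : ℝ) ^ i) := by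
  refine ⟨2 * Real.exp 2, by positivity, fun n v i hn hv hiv hvn => ?_⟩
  have hle : v ≤ n := (Nat.le_self_pow two_ne_zero v).trans hvn
  have hd : (0 : ℝ) < n.descFactorial v := by
    exact_mod_cast Nat.descFactorial_pos.2 hle
  have hm : 0 ≤ (v.descFactorial i : ℝ) ^ 2 / ((i.factorial : ℝ) * (n : ℝ) ^ i) := by positivity
  rw [hypergeometric_ratio_eq hn hiv hle, mul_div_assoc _ ((v.descFactorial i : ℝ) ^ 2),
    ← sub_one_mul, abs_mul, abs_of_nonneg hm]
  refine mul_le_mul_of_nonneg_right (abs_le.2 ⟨?_, ?_⟩) hm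
  · have hlow := (le_div_iff₀ hd).2 (one_sub_mul_descFactorial_le hn hv hiv)
    have hx : 0 ≤ (v : ℝ) ^ 2 / n := by positivity
    have he : 1 ≤ Real.exp 2 := Real.one_le_exp (by norm_num)
    nlinarith
  · have hup := (div_le_iff₀ hd).2 (pow_mul_descFactorial_le hn hv hiv hvn)
    linarith
end
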